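/- Let μ be a Borel probability measure on SL₂(ℝ) with a finite exponential moment whose support generates a Zariski dense subgroup. There exist constants C > 0 and ε' > 0 such that for all s > 0, a > 0, t > 10s, and all x, x' ∈ X, Σ_{n≥0} μ^{*n}{ g : d(gx, x') ≤ e^{−s} and κ(g) − t ∈ [0, a] } ≤ C (1 + a)² e^{−ε' s}. -/

import Mathlib

open MeasureTheory Filter

noncomputable section

abbrev SL2 := Matrix.SpecialLinearGroup (Fin 2) ℝ

abbrev PX := Projectivization ℝ (Fin 2 → ℝ)

instance : TopologicalSpace SL2 := instTopologicalSpaceSubtype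
instance : TopologicalSpace PX := instTopologicalSpaceQuotient
instance : MeasurableSpace SL2 := borel _
instance : MeasurableSpace PX := borel _

/-- Euclidean norm on ℝ². -/
def enorm2 (v : Fin 2 → ℝ) : ℝ := Real.sqrt (v 0 ^ 2 + v 1 ^ 2)

/-- Operator norm of g ∈ SL₂(ℝ) w.r.t. the Euclidean norm on ℝ². -/
def opNorm (g : SL2) : ℝ :=
  ‖Matrix.toEuclideanCLM (𝕜 := ℝ) (n := Fin 2) (g : Matrix (Fin 2) (Fin 2) ℝ)‖

/-- Cartan projection κ(g) = log ‖g‖. -/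
def kappa (g : SL2) : ℝ := Real.log (opNorm g)

/-- The projective action of SL₂(ℝ) on ℙ(ℝ²). -/
def act (g : SL2) (x : PX) : PX :=
  Projectivization.map ((Matrix.SpecialLinearGroup.toLin' g).toLinearMap)
    (LinearEquiv.injective _) x

/-- The norm cocycle σ(g, ℝv) = log (‖gv‖/‖v‖). -/
def cocycle (g : SL2) (x : PX) : ℝ :=
  Real.log (enorm2 ((g : Matrix (Fin 2) (Fin 2) ℝ).mulVec x.rep) / enorm2 x.rep)

/-- The sine distance d(ℝv, ℝw) = |det(v,w)|/(‖v‖‖w‖) on ℙ(ℝ²). -/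
def projDist (x y : PX) : ℝ :=
  |x.rep 0 * y.rep 1 - x.rep 1 * y.rep 0| / (enorm2 x.rep * enorm2 y.rep)

/-- An angle θ(x) ∈ ℝ representing x = ℝ(cos θ, sin θ). -/
def pangle (x : PX) : ℝ := Complex.arg (x.rep 0 + x.rep 1 * Complex.I)

/-- The (topological) support of a measure. -/
def measSupp (μ : Measure SL2) : Set SL2 :=
  {g | ∀ U : Set SL2, IsOpen U → g ∈ U → 0 < μ U}

/-- μ has a finite exponential moment. -/
def HasExpMoment (μ : Measure SL2) : Prop :=
  ∃ ε₁ > (0 : ℝ), ∫⁻ g, ENNReal.ofReal (opNorm g ^ ε₁) ∂μ < ⊤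

/-- The group generated by the support of μ is Zariski dense in SL₂(ℝ),
equivalently it is not solvable. -/
def ZariskiDense (μ : Measure SL2) : Prop :=
  ¬ IsSolvable (Subgroup.closure (measSupp μ))

/-- ν is μ-stationary: μ ∗ ν = ν. -/
def IsMuStationary (μ : Measure SL2) (ν : Measure PX) : Prop :=
  μ.bind (fun g => ν.map (act g)) = ν

/-- The product g₁ ⋯ gₙ of a word (g₁, …, gₙ). -/
def word {n : ℕ} (g : Fin n → SL2) : SL2 := (List.ofFn g).prod

/-- The product measure μ^{⊗n} on words of length n. -/
def μpi (μ : Measure SL2) (n : ℕ) : Measure (Fin n → SL2) := Measure.pi fun _ => μ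

/-!
The mean displacement of the walk on the hyperbolic plane is unbounded: otherwise `supp μ` fixes a
point there, and point stabilizers are commutative. A stationary measure on the circle of directions
gives every line mass less than `1/2`: there are at most two lines of mass `1/2` or more, `supp μ`
would permute them, and the generated group would again be solvable. Together these facts give
`log ‖gu‖` a positive drift, uniformly in `u`, hence an exponential decay of `E ‖gu‖ ^ (-ε)`.

Two consequences follow. The directions of `gu` and of `g⁻¹v` are Hölder regular, so `gu` is
`e^{-s}`-close to `v` with probability `O(e^{-ε's})` once the number of steps exceeds a multiple of
`s`. By the maximum principle for the renewal operator, `κ` visits an interval of length `a` at most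
`O(1 + a)` times on average.

To combine them, split `g₁ ⋯ gₙ` after `k ≈ α s` letters. The left factor decides the direction and,
outside an event of exponentially small probability, has `κ ≤ s`, so that the right factor has to
visit an interval of length `O(a + s)`. For small `α`, words of fewer than `k` letters reach norm
`e^t` with exponentially small probability.
-/

namespace CartanRenewal

instance : IsTopologicalGroup SL2 := Matrix.SpecialLinearGroup.topologicalGroup

instance : BorelSpace SL2 := ⟨rfl⟩

instance : SecondCountableTopology SL2 :=
  have : SecondCountableTopology (Matrix (Fin 2) (Fin 2) ℝ) :=
    inferInstanceAs (SecondCountableTopology (Fin 2 → Fin 2 → ℝ))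
  Topology.IsEmbedding.subtypeVal.secondCountableTopology

instance : T2Space SL2 :=
  inferInstanceAs (T2Space {A : Matrix (Fin 2) (Fin 2) ℝ // A.det = 1})

/-! ### Plane geometry -/

/-- The plane `ℝ²` with its Euclidean norm. -/
abbrev Plane := EuclideanSpace ℝ (Fin 2)

/-- The linear action of `SL₂(ℝ)` on the Euclidean plane; `opNorm g` is the norm of `toCLM g`. -/
def toCLM : SL2 →* (Plane →L[ℝ] Plane) where
  toFun g := Matrix.toEuclideanCLM (𝕜 := ℝ) (n := Fin 2) (g : Matrix (Fin 2) (Fin 2) ℝ)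
  map_one' := by simp
  map_mul' := by simp

/-- The signed area `det (v, w)` spanned by two vectors of the plane. -/
def area (v w : Plane) : ℝ := v 0 * w 1 - v 1 * w 0

/-- The rotation of the plane by a quarter turn. -/
def rot (v : Plane) : Plane := WithLp.toLp 2 ![-v 1, v 0]

@[simp] lemma rot_zero (v : Plane) : rot v 0 = -v 1 := rfl

@[simp] lemma rot_one (v : Plane) : rot v 1 = v 0 := rfl

lemma norm_sq_eq (v : Plane) : ‖v‖ ^ 2 = v 0 ^ 2 + v 1 ^ 2 := by
  simp [EuclideanSpace.norm_sq_eq]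

@[simp] lemma norm_rot (v : Plane) : ‖rot v‖ = ‖v‖ := by
  rw [← sq_eq_sq₀ (norm_nonneg _) (norm_nonneg _), norm_sq_eq, norm_sq_eq, rot_zero, rot_one]
  ring

lemma area_rot_self (v : Plane) : area v (rot v) = ‖v‖ ^ 2 := by
  rw [norm_sq_eq, area, rot_zero, rot_one]
  ring

lemma area_self (v : Plane) : area v v = 0 := by
  rw [area]
  ring

lemma area_swap (v w : Plane) : area v w = -area w v := by
  rw [area, area]
  ring

lemma area_smul_left (a : ℝ) (v w : Plane) : area (a • v) w = a * area v w := by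
  simp only [area, PiLp.smul_apply, smul_eq_mul]
  ring

lemma area_smul_right (a : ℝ) (v w : Plane) : area v (a • w) = a * area v w := by
  simp only [area, PiLp.smul_apply, smul_eq_mul]
  ring

lemma area_sub_right (u v w : Plane) : area u (v - w) = area u v - area u w := by
  simp only [area, PiLp.sub_apply]
  ring

lemma abs_area_le (v w : Plane) : |area v w| ≤ ‖v‖ * ‖w‖ := by
  refine abs_le_of_sq_le_sq ?_ (by positivity)
  rw [mul_pow, norm_sq_eq, norm_sq_eq, area]
  nlinarith [sq_nonneg (v 0 * w 0 + v 1 * w 1)]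

lemma area_sq_add_area_rot_sq (v w : Plane) :
    area v w ^ 2 + area v (rot w) ^ 2 = ‖v‖ ^ 2 * ‖w‖ ^ 2 := by
  rw [norm_sq_eq, norm_sq_eq, area, area, rot_zero, rot_one]
  ring

lemma norm_sq_smul_eq_orthogonal_decomposition (m v : Plane) :
    ‖m‖ ^ 2 • v = area v (rot m) • m + area m v • rot m := by
  rw [norm_sq_eq]
  ext i
  fin_cases i <;> simp [area] <;> ring

lemma area_smul_eq_sub (u v w : Plane) : area u w • v = area v w • u - area v u • w := by
  ext i
  fin_cases i <;> simp [area] <;> ring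

lemma exists_eq_smul_of_area_eq_zero {v w : Plane} (hw : w ≠ 0) (h : area v w = 0) :
    ∃ a : ℝ, v = a • w := by
  have hnorm : ‖w‖ ^ 2 ≠ 0 := by simpa using hw
  refine ⟨(‖w‖ ^ 2)⁻¹ * area v (rot w), ?_⟩
  rw [← smul_smul, eq_inv_smul_iff₀ hnorm, norm_sq_smul_eq_orthogonal_decomposition w v,
    area_swap w v, h, neg_zero, zero_smul, add_zero]

lemma area_eq_zero_trans {u v w : Plane} (hv : v ≠ 0) (huv : area u v = 0) (hvw : area v w = 0) :
    area u w = 0 := by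
  obtain ⟨a, rfl⟩ := exists_eq_smul_of_area_eq_zero hv huv
  rw [area_smul_left, hvw, mul_zero]

lemma det_fin_two_eq_one (g : SL2) : g 0 0 * g 1 1 - g 0 1 * g 1 0 = 1 := by
  rw [← Matrix.det_fin_two, g.det_coe]

lemma toCLM_apply_zero (g : SL2) (v : Plane) : toCLM g v 0 = g 0 0 * v 0 + g 0 1 * v 1 := by
  simp [toCLM, Matrix.mulVec, dotProduct]

lemma toCLM_apply_one (g : SL2) (v : Plane) : toCLM g v 1 = g 1 0 * v 0 + g 1 1 * v 1 := by
  simp [toCLM, Matrix.mulVec, dotProduct]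

lemma toCLM_mul_apply (g h : SL2) (v : Plane) : toCLM (g * h) v = toCLM g (toCLM h v) := by
  rw [map_mul, mul_apply_eq_comp]

@[simp] lemma toCLM_inv_apply_self (g : SL2) (v : Plane) : toCLM g⁻¹ (toCLM g v) = v := by
  rw [← toCLM_mul_apply, inv_mul_cancel, map_one, one_apply_eq_self]

@[simp] lemma toCLM_apply_inv_self (g : SL2) (v : Plane) : toCLM g (toCLM g⁻¹ v) = v := by
  rw [← toCLM_mul_apply, mul_inv_cancel, map_one, one_apply_eq_self]

@[simp] lemma area_toCLM (g : SL2) (v w : Plane) : area (toCLM g v) (toCLM g w) = area v w := by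
  simp only [area, toCLM_apply_zero, toCLM_apply_one]
  linear_combination (v 0 * w 1 - v 1 * w 0) * det_fin_two_eq_one g

lemma area_toCLM_left (g : SL2) (v w : Plane) : area (toCLM g v) w = area v (toCLM g⁻¹ w) := by
  rw [← area_toCLM g⁻¹, toCLM_inv_apply_self]

/-! ### The operator norm and the Cartan projection -/

lemma opNorm_nonneg (g : SL2) : 0 ≤ opNorm g := norm_nonneg _

lemma norm_toCLM_le (g : SL2) (v : Plane) : ‖toCLM g v‖ ≤ opNorm g * ‖v‖ := (toCLM g).le_opNorm v

lemma exists_norm_toCLM_eq_opNorm (g : SL2) : ∃ v : Plane, ‖v‖ = 1 ∧ ‖toCLM g v‖ = opNorm g := by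
  have hne : (Metric.sphere (0 : Plane) 1).Nonempty := NormedSpace.sphere_nonempty.2 zero_le_one
  obtain ⟨v, hv, hmax⟩ := (isCompact_sphere (0 : Plane) 1).exists_isMaxOn hne
    (f := fun v => ‖toCLM g v‖) (by fun_prop)
  have hv1 : ‖v‖ = 1 := mem_sphere_zero_iff_norm.1 hv
  refine ⟨v, hv1, le_antisymm (by simpa [hv1] using norm_toCLM_le g v) ?_⟩
  exact ContinuousLinearMap.opNorm_le_of_unit_norm (norm_nonneg _)
    fun x hx => hmax (mem_sphere_zero_iff_norm.2 hx)

-- With `z = g⁻¹v`, invariance of the area gives `‖z‖² = area z (rot z) = area v (g (rot z))`.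
lemma opNorm_inv_le (g : SL2) : opNorm g⁻¹ ≤ opNorm g := by
  obtain ⟨v, hv, hgv⟩ := exists_norm_toCLM_eq_opNorm g⁻¹
  set z := toCLM g⁻¹ v with hz
  have hsq : ‖z‖ * ‖z‖ ≤ opNorm g * ‖z‖ :=
    calc ‖z‖ * ‖z‖ = area v (toCLM g (rot z)) := by
          rw [← sq, ← area_rot_self, ← area_toCLM g, hz, toCLM_apply_inv_self]
      _ ≤ ‖v‖ * ‖toCLM g (rot z)‖ := (le_abs_self _).trans (abs_area_le _ _)
      _ ≤ opNorm g * ‖z‖ := by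
          rw [hv, one_mul, ← norm_rot z]
          exact norm_toCLM_le g _
  rw [← hgv]
  rcases (norm_nonneg z).eq_or_lt with h | h
  · exact h ▸ opNorm_nonneg g
  · exact le_of_mul_le_mul_right hsq h

lemma opNorm_inv (g : SL2) : opNorm g⁻¹ = opNorm g :=
  le_antisymm (opNorm_inv_le g) (by simpa using opNorm_inv_le g⁻¹)

lemma opNorm_mul_le (g h : SL2) : opNorm (g * h) ≤ opNorm g * opNorm h := by
  change ‖toCLM (g * h)‖ ≤ ‖toCLM g‖ * ‖toCLM h‖
  rw [map_mul]
  exact norm_mul_le _ _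

@[simp] lemma opNorm_one : opNorm 1 = 1 := by simp [opNorm]

lemma one_le_opNorm (g : SL2) : 1 ≤ opNorm g := by
  have h := opNorm_mul_le g g⁻¹
  rw [mul_inv_cancel, opNorm_one, opNorm_inv] at h
  nlinarith [opNorm_nonneg g]

lemma opNorm_pos (g : SL2) : 0 < opNorm g := one_pos.trans_le (one_le_opNorm g)

lemma norm_le_opNorm_mul_norm_toCLM (g : SL2) (v : Plane) : ‖v‖ ≤ opNorm g * ‖toCLM g v‖ := by
  simpa [opNorm_inv] using norm_toCLM_le g⁻¹ (toCLM g v)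

lemma toCLM_ne_zero (g : SL2) {v : Plane} (hv : v ≠ 0) : toCLM g v ≠ 0 := fun h =>
  hv (by simpa [h] using (toCLM_inv_apply_self g v).symm)

lemma opNorm_mul_abs_area_le (g : SL2) (u w : Plane) :
    opNorm g * |area u w| ≤ ‖w‖ * ‖toCLM g u‖ + ‖u‖ * ‖toCLM g w‖ := by
  obtain ⟨z, hz, hgz⟩ := exists_norm_toCLM_eq_opNorm g
  have hzw := abs_area_le z w
  have hzu := abs_area_le z u
  rw [hz, one_mul] at hzw hzu
  calc opNorm g * |area u w| = ‖area z w • toCLM g u - area z u • toCLM g w‖ := by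
        rw [← map_smul, ← map_smul, ← map_sub, ← area_smul_eq_sub, map_smul, norm_smul, hgz,
          Real.norm_eq_abs, mul_comm]
    _ ≤ |area z w| * ‖toCLM g u‖ + |area z u| * ‖toCLM g w‖ := by
        refine (norm_sub_le _ _).trans_eq ?_
        rw [norm_smul, norm_smul, Real.norm_eq_abs, Real.norm_eq_abs]
    _ ≤ ‖w‖ * ‖toCLM g u‖ + ‖u‖ * ‖toCLM g w‖ := by gcongr

lemma kappa_nonneg (g : SL2) : 0 ≤ kappa g := Real.log_nonneg (one_le_opNorm g)

lemma exp_kappa (g : SL2) : Real.exp (kappa g) = opNorm g := Real.exp_log (opNorm_pos g)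

lemma kappa_mul_le (g h : SL2) : kappa (g * h) ≤ kappa g + kappa h := by
  rw [← Real.exp_le_exp, Real.exp_add, exp_kappa, exp_kappa, exp_kappa]
  exact opNorm_mul_le g h

lemma kappa_inv (g : SL2) : kappa g⁻¹ = kappa g := by rw [kappa, kappa, opNorm_inv]

lemma kappa_le_kappa_mul_add_kappa_left (g h : SL2) : kappa h ≤ kappa (g * h) + kappa g := by
  simpa [kappa_inv, add_comm] using kappa_mul_le g⁻¹ (g * h)

@[fun_prop] lemma continuous_toCLM : Continuous toCLM :=
  (LinearMap.continuous_of_finiteDimensional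
    (Matrix.toEuclideanCLM (𝕜 := ℝ) (n := Fin 2)).toAlgEquiv.toLinearMap).comp
    continuous_subtype_val

@[fun_prop] lemma continuous_opNorm : Continuous opNorm := continuous_toCLM.norm

@[fun_prop] lemma continuous_opNorm_rpow (ε : ℝ) : Continuous fun g => opNorm g ^ ε :=
  continuous_opNorm.rpow_const fun g => Or.inl (opNorm_pos g).ne'

@[fun_prop] lemma continuous_kappa : Continuous kappa :=
  continuous_opNorm.log fun g => (opNorm_pos g).ne'

lemma abs_entry_le_opNorm (g : SL2) (i j : Fin 2) : |g i j| ≤ opNorm g := by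
  have hcol : toCLM g (EuclideanSpace.single j 1) i = g i j := by
    fin_cases i <;> fin_cases j <;> simp [toCLM_apply_zero, toCLM_apply_one]
  calc |g i j| = ‖toCLM g (EuclideanSpace.single j 1) i‖ := by rw [hcol, Real.norm_eq_abs]
    _ ≤ ‖toCLM g (EuclideanSpace.single j 1)‖ := PiLp.norm_apply_le _ i
    _ ≤ opNorm g := by simpa using norm_toCLM_le g (EuclideanSpace.single j 1)

/-! ### Convolution powers -/

section ConvPow

variable {M : Type*} [MeasurableSpace M]

lemma lintegral_inv [Inv M] [MeasurableInv M] (μ : Measure M) {f : M → ENNReal}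
    (hf : Measurable f) : ∫⁻ g, f g ∂μ.inv = ∫⁻ g, f g⁻¹ ∂μ :=
  lintegral_map hf measurable_inv

section Monoid

variable [Monoid M]

/-- The `n`-fold multiplicative convolution `μ^{*n}`, with `μ^{*0}` the Dirac mass at `1`. -/
def convPow (μ : Measure M) : ℕ → Measure M
  | 0 => Measure.dirac 1
  | n + 1 => μ ∗ₘ convPow μ n

variable [MeasurableMul₂ M] (μ : Measure M) [IsProbabilityMeasure μ]

instance isProbabilityMeasure_convPow (n : ℕ) : IsProbabilityMeasure (convPow μ n) := by
  induction n with
  | zero => exact Measure.dirac.isProbabilityMeasure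
  | succ n ih => exact Measure.probabilitymeasure_of_probabilitymeasures_mconv _ _

lemma convPow_one : convPow μ 1 = μ := Measure.mconv_dirac_one μ

lemma convPow_add (m n : ℕ) : convPow μ (m + n) = convPow μ m ∗ₘ convPow μ n := by
  induction m with
  | zero => rw [Nat.zero_add, convPow, Measure.dirac_one_mconv]
  | succ m ih => rw [Nat.succ_add, convPow, ih, convPow, Measure.mconv_assoc]

lemma convPow_succ_right (n : ℕ) : convPow μ (n + 1) = convPow μ n ∗ₘ μ := by
  rw [convPow_add, convPow_one]

variable {μ} {ν : Measure M} [SFinite ν]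

lemma mconv_apply {s : Set M} (hs : MeasurableSet s) :
    (μ ∗ₘ ν) s = ∫⁻ h, μ {g | g * h ∈ s} ∂ν := by
  rw [Measure.mconv, Measure.map_apply measurable_mul hs,
    Measure.prod_apply_symm (measurable_mul hs)]
  rfl

end Monoid

variable [Group M] [MeasurableMul₂ M] [MeasurableInv M] (μ : Measure M) [IsProbabilityMeasure μ]

instance isProbabilityMeasure_inv : IsProbabilityMeasure μ.inv :=
  Measure.isProbabilityMeasure_map measurable_inv.aemeasurable

lemma convPow_inv (n : ℕ) : convPow μ.inv n = (convPow μ n).inv := by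
  induction n with
  | zero => rw [convPow, convPow, Measure.inv_def, Measure.map_dirac' measurable_inv, inv_one]
  | succ n ih =>
    refine Measure.ext_of_lintegral _ fun f hf => ?_
    rw [convPow, ih, lintegral_inv _ hf, convPow_succ_right, Measure.lintegral_mconv hf,
      Measure.lintegral_mconv (by fun_prop), lintegral_lintegral_swap (by fun_prop),
      lintegral_inv _ (by fun_prop)]
    refine lintegral_congr fun g => ?_
    rw [lintegral_inv _ (by fun_prop)]
    simp only [mul_inv_rev]

end ConvPow

lemma word_succ {n : ℕ} (g : Fin (n + 1) → SL2) : word g = g 0 * word (Fin.tail g) := by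
  rw [word, List.ofFn_succ, List.prod_cons]
  rfl

@[fun_prop] lemma measurable_word {n : ℕ} : Measurable (word : (Fin n → SL2) → SL2) := by
  induction n with
  | zero => exact measurable_const
  | succ n ih =>
    simp only [funext word_succ]
    exact (measurable_pi_apply 0).mul
      (ih.comp (measurable_pi_lambda _ fun i => measurable_pi_apply i.succ))

lemma map_word_μpi (μ : Measure SL2) [IsProbabilityMeasure μ] (n : ℕ) :
    (μpi μ n).map word = convPow μ n := by
  induction n with
  | zero =>
    change (Measure.pi _).map (fun _ => (1 : SL2)) = _
    rw [Measure.map_const, measure_univ, one_smul, convPow]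
  | succ n ih =>
    have : IsProbabilityMeasure (μpi μ n) := Measure.pi.instIsProbabilityMeasure _
    have hsplit := (measurePreserving_piFinSuccAbove (fun _ : Fin (n + 1) => μ) 0).map_eq
    have hword : (word : (Fin (n + 1) → SL2) → SL2) = (fun p => p.1 * p.2) ∘ Prod.map id word ∘
        MeasurableEquiv.piFinSuccAbove (fun _ : Fin (n + 1) => SL2) 0 := funext word_succ
    rw [hword, ← Measure.map_map measurable_mul (by fun_prop), ← Measure.map_map (by fun_prop)
      (MeasurableEquiv.measurable _), μpi, hsplit, convPow, ← ih, Measure.mconv,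
      ← Measure.map_prod_map _ _ measurable_id measurable_word, Measure.map_id]
    rfl

lemma μpi_setOf_word_mem (μ : Measure SL2) [IsProbabilityMeasure μ] (n : ℕ) {s : Set SL2}
    (hs : MeasurableSet s) : μpi μ n {g | word g ∈ s} = convPow μ n s := by
  rw [← map_word_μpi, Measure.map_apply measurable_word hs]
  rfl

/-- The exponential moment `∫ ‖g‖^ε dμ(g)`. -/
def expMoment (μ : Measure SL2) (ε : ℝ) : ENNReal := ∫⁻ g, ENNReal.ofReal (opNorm g ^ ε) ∂μ

lemma expMoment_mono (μ : Measure SL2) {ε ε' : ℝ} (h : ε ≤ ε') : expMoment μ ε ≤ expMoment μ ε' :=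
  lintegral_mono fun g => ENNReal.ofReal_le_ofReal
    (Real.rpow_le_rpow_of_exponent_le (one_le_opNorm g) h)

lemma expMoment_inv (μ : Measure SL2) (ε : ℝ) :
    expMoment μ.inv ε = expMoment μ ε := by
  rw [expMoment, lintegral_inv _ (by fun_prop), expMoment]
  simp only [opNorm_inv]

lemma expMoment_mconv_le (μ ν : Measure SL2) [SFinite ν] {ε : ℝ} (hε : 0 ≤ ε) :
    expMoment (μ ∗ₘ ν) ε ≤ expMoment μ ε * expMoment ν ε := by
  have hmul : ∀ g h : SL2, ENNReal.ofReal (opNorm (g * h) ^ ε) ≤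
      ENNReal.ofReal (opNorm g ^ ε) * ENNReal.ofReal (opNorm h ^ ε) := fun g h => by
    rw [← ENNReal.ofReal_mul (Real.rpow_nonneg (opNorm_nonneg g) ε),
      ← Real.mul_rpow (opNorm_nonneg g) (opNorm_nonneg h)]
    exact ENNReal.ofReal_le_ofReal
      (Real.rpow_le_rpow (opNorm_nonneg _) (opNorm_mul_le g h) hε)
  calc expMoment (μ ∗ₘ ν) ε = ∫⁻ g, ∫⁻ h, ENNReal.ofReal (opNorm (g * h) ^ ε) ∂ν ∂μ :=
        Measure.lintegral_mconv (by fun_prop)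
    _ ≤ ∫⁻ g, ∫⁻ h, ENNReal.ofReal (opNorm g ^ ε) * ENNReal.ofReal (opNorm h ^ ε) ∂ν ∂μ :=
        lintegral_mono fun g => lintegral_mono fun h => hmul g h
    _ = expMoment μ ε * expMoment ν ε := lintegral_lintegral_mul (by fun_prop) (by fun_prop)

lemma expMoment_convPow_le (μ : Measure SL2) [IsProbabilityMeasure μ] {ε : ℝ} (hε : 0 ≤ ε)
    (n : ℕ) : expMoment (convPow μ n) ε ≤ expMoment μ ε ^ n := by
  induction n with
  | zero => rw [convPow, expMoment, lintegral_dirac, opNorm_one, Real.one_rpow,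
      ENNReal.ofReal_one, pow_zero]
  | succ n ih =>
    rw [pow_succ']
    exact (expMoment_mconv_le μ _ hε).trans (mul_le_mul_right ih _)

lemma integrable_opNorm_rpow {μ : Measure SL2} {ε : ℝ} (hμ : expMoment μ ε < ⊤) :
    Integrable (fun g => opNorm g ^ ε) μ :=
  ⟨(continuous_opNorm_rpow ε).aestronglyMeasurable, (hasFiniteIntegral_iff_ofReal
    (ae_of_all _ fun g => Real.rpow_nonneg (opNorm_nonneg g) ε)).2 hμ⟩

lemma integrable_kappa {μ : Measure SL2} {ε : ℝ} (hε : 0 < ε) (hμ : expMoment μ ε < ⊤) :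
    Integrable kappa μ := by
  refine ((integrable_opNorm_rpow hμ).div_const ε).mono' continuous_kappa.aestronglyMeasurable
    (ae_of_all _ fun g => ?_)
  rw [Real.norm_eq_abs, abs_of_nonneg (kappa_nonneg g)]
  exact Real.log_le_rpow_div (opNorm_nonneg g) hε

/-! ### Solvability criteria -/

open scoped commutatorElement

lemma isSolvable_closure_of_commute {G : Type*} [Group G] {S : Set G}
    (h : ∀ g ∈ S, ∀ k ∈ S, g * k = k * g) : Group.IsSolvable (Subgroup.closure S) :=
  have := Subgroup.isMulCommutative_closure h
  Group.isSolvable_of_comm mul_comm'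

lemma isSolvable_closure_of_commutator_mem {G : Type*} [Group G] {S : Set G} {B U : Subgroup G}
    (hS : S ⊆ B) (hBU : ∀ g ∈ B, ∀ h ∈ B, ⁅g, h⁆ ∈ U) (hU : ∀ g ∈ U, ∀ h ∈ U, g * h = h * g) :
    Group.IsSolvable (Subgroup.closure S) := by
  have hSB : Subgroup.closure S ≤ B := (Subgroup.closure_le B).2 hS
  have hderived : derivedSeries (Subgroup.closure S) 1 ≤ U.comap (Subgroup.closure S).subtype := by
    rw [derivedSeries_succ]
    exact Subgroup.commutator_le.2 fun g _ h _ => hBU g (hSB g.2) h (hSB h.2)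
  refine ⟨2, ?_⟩
  rw [eq_bot_iff, derivedSeries_succ]
  refine Subgroup.commutator_le.2 fun g hg h hh => ?_
  rw [Subgroup.mem_bot, commutatorElement_eq_one_iff_mul_comm]
  exact Subtype.ext (hU _ (hderived hg) _ (hderived hh))

lemma toCLM_injective : Function.Injective toCLM := fun _ _ h =>
  Subtype.ext ((Matrix.toEuclideanCLM (𝕜 := ℝ) (n := Fin 2)).injective h)

lemma eq_of_toCLM_eq_of_area_ne_zero {g h : SL2} {u w : Plane} (huw : area u w ≠ 0)
    (hu : toCLM g u = toCLM h u) (hw : toCLM g w = toCLM h w) : g = h := by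
  refine toCLM_injective (ContinuousLinearMap.ext fun v => ?_)
  refine smul_right_injective Plane huw ?_
  simp only [← map_smul, area_smul_eq_sub u v w]
  simp only [map_sub, map_smul, hu, hw]

/-- `g` maps the line spanned by `u` to the line spanned by `v`. -/
def MapsLine (g : SL2) (u v : Plane) : Prop := area (toCLM g u) v = 0

lemma mapsLine_one (u : Plane) : MapsLine 1 u u := by
  rw [MapsLine, map_one, one_apply_eq_self, area_self]

lemma MapsLine.mul {g h : SL2} {u v w : Plane} (hv : v ≠ 0) (hg : MapsLine g v w)
    (hh : MapsLine h u v) : MapsLine (g * h) u w := by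
  rw [MapsLine, toCLM_mul_apply]
  exact area_eq_zero_trans (toCLM_ne_zero g hv) (by rwa [area_toCLM]) hg

lemma MapsLine.inv {g : SL2} {u v : Plane} (h : MapsLine g u v) : MapsLine g⁻¹ v u := by
  rw [MapsLine, area_toCLM_left, inv_inv, area_swap, neg_eq_zero]
  exact h

lemma MapsLine.exists_eq_smul {g : SL2} {u v : Plane} (hv : v ≠ 0) (h : MapsLine g u v) :
    ∃ a : ℝ, toCLM g u = a • v :=
  exists_eq_smul_of_area_eq_zero hv h

lemma mul_apply_comm_of_mapsLine {g h : SL2} {y : Plane} (hy : y ≠ 0) (hg : MapsLine g y y)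
    (hh : MapsLine h y y) : toCLM (g * h) y = toCLM (h * g) y := by
  obtain ⟨a, ha⟩ := hg.exists_eq_smul hy
  obtain ⟨b, hb⟩ := hh.exists_eq_smul hy
  simp only [toCLM_mul_apply, ha, hb, map_smul, smul_smul, mul_comm]

/-- The subgroup of matrices preserving the line spanned by `y`. -/
def lineStabilizer {y : Plane} (hy : y ≠ 0) : Subgroup SL2 where
  carrier := {g | MapsLine g y y}
  one_mem' := mapsLine_one y
  mul_mem' hg hh := MapsLine.mul hy hg hh
  inv_mem' := MapsLine.inv

/-- The subgroup of matrices fixing the vector `y`. -/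
def vectorStabilizer (y : Plane) : Subgroup SL2 where
  carrier := {g | toCLM g y = y}
  one_mem' := by simp
  mul_mem' {g h} (hg : toCLM g y = y) (hh : toCLM h y = y) := by
    rw [Set.mem_ofPred_eq, toCLM_mul_apply, hh, hg]
  inv_mem' {g} (hg : toCLM g y = y) := by
    rw [Set.mem_ofPred_eq]
    nth_rw 1 [← hg]
    exact toCLM_inv_apply_self g y

lemma commutator_mem_vectorStabilizer {y : Plane} (hy : y ≠ 0) {g h : SL2}
    (hg : g ∈ lineStabilizer hy) (hh : h ∈ lineStabilizer hy) : ⁅g, h⁆ ∈ vectorStabilizer y := by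
  obtain ⟨a, ha⟩ := MapsLine.exists_eq_smul hy
    ((lineStabilizer hy).inv_mem ((lineStabilizer hy).mul_mem hh hg))
  change toCLM ⁅g, h⁆ y = y
  rw [show ⁅g, h⁆ = g * h * (h * g)⁻¹ by group, toCLM_mul_apply, ha, map_smul,
    mul_apply_comm_of_mapsLine hy hg hh, ← map_smul, ← ha, toCLM_apply_inv_self]

lemma mul_comm_of_mem_vectorStabilizer {y : Plane} (hy : y ≠ 0) {g h : SL2}
    (hg : g ∈ vectorStabilizer y) (hh : h ∈ vectorStabilizer y) : g * h = h * g := by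
  have hg : toCLM g y = y := hg
  have hh : toCLM h y = y := hh
  have hrot : ∀ {k : SL2}, toCLM k y = y → ∃ b : ℝ, toCLM k (rot y) = rot y + b • y := by
    intro k hk
    obtain ⟨b, hb⟩ := exists_eq_smul_of_area_eq_zero (v := toCLM k (rot y) - rot y) hy (by
      rw [area_swap, area_sub_right, neg_eq_zero, sub_eq_zero]
      nth_rw 1 [← hk]
      exact area_toCLM k _ _)
    exact ⟨b, by rw [← hb, add_sub_cancel]⟩
  obtain ⟨b, hb⟩ := hrot hg
  obtain ⟨c, hc⟩ := hrot hh
  refine eq_of_toCLM_eq_of_area_ne_zero (u := y) (w := rot y) ?_ ?_ ?_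
  · rw [area_rot_self]
    exact pow_ne_zero 2 (norm_ne_zero_iff.2 hy)
  · rw [toCLM_mul_apply, toCLM_mul_apply, hg, hh, hg]
  · simp only [toCLM_mul_apply, hb, hc, map_add, map_smul, hg, hh, add_right_comm]

lemma isSolvable_closure_of_mapsLine {S : Set SL2} {y : Plane} (hy : y ≠ 0)
    (h : ∀ g ∈ S, MapsLine g y y) : Group.IsSolvable (Subgroup.closure S) :=
  isSolvable_closure_of_commutator_mem (B := lineStabilizer hy) h
    (fun _ hg _ hh => commutator_mem_vectorStabilizer hy hg hh)
    fun _ hg _ hh => mul_comm_of_mem_vectorStabilizer hy hg hh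

/-- The subgroup of matrices permuting the lines spanned by the vectors `ℓ i` through a permutation
of the indices lying in `H`. -/
def linesStabilizer {ι : Type*} {ℓ : ι → Plane} (hℓ : ∀ i, ℓ i ≠ 0) (H : Subgroup (Equiv.Perm ι)) :
    Subgroup SL2 where
  carrier := {g | ∃ σ ∈ H, ∀ i, MapsLine g (ℓ i) (ℓ (σ i))}
  one_mem' := ⟨1, H.one_mem, fun i => mapsLine_one (ℓ i)⟩
  mul_mem' := by
    rintro g h ⟨σ, hσ, hg⟩ ⟨τ, hτ, hh⟩
    exact ⟨σ * τ, H.mul_mem hσ hτ, fun i => (hg (τ i)).mul (hℓ _) (hh i)⟩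
  inv_mem' := by
    rintro g ⟨σ, hσ, hg⟩
    exact ⟨σ⁻¹, H.inv_mem hσ, fun i => by simpa using (hg (σ⁻¹ i)).inv⟩

lemma commutator_mem_linesStabilizer_bot {ι : Type*} {ℓ : ι → Plane} (hℓ : ∀ i, ℓ i ≠ 0)
    (hι : ∀ σ τ : Equiv.Perm ι, σ * τ = τ * σ) {g h : SL2} (hg : g ∈ linesStabilizer hℓ ⊤)
    (hh : h ∈ linesStabilizer hℓ ⊤) : ⁅g, h⁆ ∈ linesStabilizer hℓ ⊥ := by
  obtain ⟨σ, -, hσ⟩ := hg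
  obtain ⟨τ, -, hτ⟩ := hh
  refine ⟨⁅σ, τ⁆, commutatorElement_eq_one_iff_mul_comm.2 (hι σ τ), fun i => ?_⟩
  have hinv : ∀ (k : SL2) (ρ : Equiv.Perm ι), (∀ j, MapsLine k (ℓ j) (ℓ (ρ j))) →
      ∀ j, MapsLine k⁻¹ (ℓ j) (ℓ (ρ⁻¹ j)) := fun k ρ hρ j => by simpa using (hρ (ρ⁻¹ j)).inv
  rw [commutatorElement_def, commutatorElement_def]
  exact (((hσ _).mul (hℓ _) (hτ _)).mul (hℓ _) (hinv g σ hσ _)).mul (hℓ _) (hinv h τ hτ i)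

lemma ne_zero_of_area_ne_zero {ℓ : Bool → Plane} (hℓ : area (ℓ false) (ℓ true) ≠ 0) (b : Bool) :
    ℓ b ≠ 0 := by
  cases b <;> exact fun h0 => hℓ (by simp [h0, area])

lemma isSolvable_closure_of_mapsLine_perm {S : Set SL2} {ℓ : Bool → Plane}
    (hℓ : area (ℓ false) (ℓ true) ≠ 0)
    (h : ∀ g ∈ S, ∃ σ : Equiv.Perm Bool, ∀ i, MapsLine g (ℓ i) (ℓ (σ i))) :
    Group.IsSolvable (Subgroup.closure S) := by
  have hne := ne_zero_of_area_ne_zero hℓ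
  refine isSolvable_closure_of_commutator_mem (B := linesStabilizer hne ⊤)
    (U := linesStabilizer hne ⊥) (fun g hg => ?_)
    (fun g hg k hk => commutator_mem_linesStabilizer_bot hne (by decide) hg hk) ?_
  · obtain ⟨σ, hσ⟩ := h g hg
    exact ⟨σ, Subgroup.mem_top σ, hσ⟩
  · rintro g ⟨σ, rfl, hg⟩ k ⟨τ, rfl, hk⟩
    exact eq_of_toCLM_eq_of_area_ne_zero hℓ (mul_apply_comm_of_mapsLine (hne _) (hg _) (hk _))
      (mul_apply_comm_of_mapsLine (hne _) (hg _) (hk _))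

/-! ### Random walks with bounded mean displacement fix a point -/

section Displacement

variable {G X : Type*} [Group G] [MetricSpace X] [MulAction G X]

-- The fixed point is the circumcentre of `Z`; `hmid` makes it unique.
lemma exists_smul_eq_of_isCompact_of_mapsTo [ProperSpace X] [IsIsometricSMul G X]
    (hmid : ∀ x y : X, x ≠ y → ∃ m, ∀ z, dist m z < max (dist x z) (dist y z))
    {Z : Set X} (hZ : IsCompact Z) (hne : Z.Nonempty) {S : Set G}
    (hS : ∀ g ∈ S, Set.MapsTo (g • ·) Z Z) : ∃ c : X, ∀ g ∈ S, g • c = c := by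
  obtain ⟨z₀, hz₀⟩ := hne
  let radius : X → ℝ := fun x => sSup (dist x '' Z)
  have hcont : Continuous radius := hZ.continuous_sSup continuous_dist
  have hle : ∀ x, ∀ z ∈ Z, dist x z ≤ radius x := fun x z hz =>
    le_csSup (hZ.bddAbove_image (by fun_prop)) ⟨z, hz, rfl⟩
  have hattained : ∀ x, ∃ z ∈ Z, radius x = dist x z := fun x =>
    hZ.exists_sSup_image_eq ⟨z₀, hz₀⟩ (by fun_prop)
  have hproper : Tendsto radius (cocompact X) atTop :=
    tendsto_atTop_mono (fun x => hle x z₀ hz₀) (tendsto_dist_right_cocompact_atTop z₀)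
  have : Nonempty X := ⟨z₀⟩
  obtain ⟨c, hc⟩ := hcont.exists_forall_le hproper
  have huniq : ∀ y, radius y ≤ radius c → y = c := by
    intro y hy
    by_contra hyc
    obtain ⟨m, hm⟩ := hmid y c hyc
    obtain ⟨z, hz, hmz⟩ := hattained m
    refine (hc m).not_gt ?_
    rw [hmz]
    exact (hm z).trans_le (max_le ((hle y z hz).trans hy) (hle c z hz))
  refine ⟨c, fun g hg => ?_⟩
  rw [← eq_inv_smul_iff, eq_comm]
  obtain ⟨z, hz, hgz⟩ := hattained (g⁻¹ • c)
  refine huniq _ ?_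
  rw [hgz, ← dist_smul g, smul_inv_smul]
  exact hle c _ (hS g hg hz)

variable [MeasurableSpace G]

lemma measurable_edist_smul [TopologicalSpace G] [OpensMeasurableSpace G] [ContinuousSMul G X]
    (o x : X) : Measurable fun g : G => edist (g • x) o :=
  Continuous.measurable (by fun_prop)

variable (μ : Measure G)

/-- The mean distance to `o` of the image of `x` after `n` steps of the random walk on `X`. -/
def meanDist (n : ℕ) (o x : X) : ENNReal := ∫⁻ g, edist (g • x) o ∂convPow μ n

/-- The lower limit of the mean distances to `o` of the random walk started at `x`. -/
def liminfMeanDist (o x : X) : ENNReal := liminf (fun n => meanDist μ n o x) atTop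

variable [MeasurableMul₂ G] [IsProbabilityMeasure μ]

lemma meanDist_succ [TopologicalSpace G] [OpensMeasurableSpace G]
    [ContinuousSMul G X] (n : ℕ) (o x : X) :
    meanDist μ (n + 1) o x = ∫⁻ h, meanDist μ n o (h • x) ∂μ := by
  have hmeas : Measurable fun p : G × G => edist ((p.1 * p.2) • x) o :=
    (measurable_edist_smul o x).comp measurable_mul
  rw [meanDist, convPow_succ_right, Measure.lintegral_mconv (measurable_edist_smul o x),
    lintegral_lintegral_swap hmeas.aemeasurable]
  simp only [meanDist, mul_smul]

variable [IsIsometricSMul G X]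

lemma meanDist_le_add_edist (n : ℕ) (o x y : X) :
    meanDist μ n o x ≤ meanDist μ n o y + edist x y :=
  calc meanDist μ n o x ≤ ∫⁻ g, (edist (g • y) o + edist x y) ∂convPow μ n :=
        lintegral_mono fun g => by
          rw [add_comm, ← edist_smul_left g x y]
          exact edist_triangle _ _ _
    _ = meanDist μ n o y + edist x y := by
        rw [lintegral_add_right _ measurable_const, lintegral_const, measure_univ, mul_one,
          meanDist]

lemma continuous_meanDist (n : ℕ) (o : X) : Continuous (meanDist μ n o) :=
  continuous_of_le_add_edist 1 ENNReal.one_ne_top fun x y => by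
    rw [one_mul]
    exact meanDist_le_add_edist μ n o x y

lemma continuous_liminfMeanDist (o : X) : Continuous (liminfMeanDist μ o) := by
  refine continuous_of_le_add_edist 1 ENNReal.one_ne_top fun x y => ?_
  rw [one_mul, liminfMeanDist, liminfMeanDist, ← liminf_add_const atTop _ _
    (by isBoundedDefault) (by isBoundedDefault)]
  exact liminf_le_liminf (Eventually.of_forall fun n => meanDist_le_add_edist μ n o x y)

variable [TopologicalSpace G] [OpensMeasurableSpace G] [ContinuousSMul G X]

lemma edist_le_meanDist_add (n : ℕ) (o x : X) :
    edist x o ≤ meanDist μ n o x + meanDist μ n o o := by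
  rw [meanDist, meanDist, ← lintegral_add_left (measurable_edist_smul o x)]
  calc edist x o = ∫⁻ _, edist x o ∂convPow μ n := by simp
    _ ≤ _ := lintegral_mono fun g => by
      rw [← edist_smul_left g x o]
      exact edist_triangle_right _ _ _

lemma lintegral_liminfMeanDist_le (o x : X) :
    ∫⁻ h, liminfMeanDist μ o (h • x) ∂μ ≤ liminfMeanDist μ o x :=
  calc ∫⁻ h, liminfMeanDist μ o (h • x) ∂μ
      ≤ liminf (fun n => ∫⁻ h, meanDist μ n o (h • x) ∂μ) atTop :=
        lintegral_liminf_le fun n =>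
          ((continuous_meanDist μ n o).comp (continuous_id.smul continuous_const)).measurable
    _ = liminfMeanDist μ o x := by
        simp only [← meanDist_succ]
        exact liminf_nat_add (fun n => meanDist μ n o x) 1

-- Fatou's lemma makes the minimum set of `liminfMeanDist μ o` invariant.
lemma exists_isCompact_forall_ae_smul_mem [ProperSpace X] {o : X} {C : ENNReal} (hC : C ≠ ⊤)
    (hbound : ∀ n, meanDist μ n o o ≤ C) :
    ∃ Z : Set X, IsCompact Z ∧ Z.Nonempty ∧ ∀ x ∈ Z, ∀ᵐ h ∂μ, h • x ∈ Z := by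
  set D := liminfMeanDist μ o with hD
  have hcont : Continuous D := continuous_liminfMeanDist μ o
  have hlower : ∀ x, edist x o ≤ D x + C := by
    intro x
    rw [hD, liminfMeanDist, ← liminf_add_const atTop _ _ (by isBoundedDefault)
      (by isBoundedDefault)]
    exact le_liminf_of_le (by isBoundedDefault) (Eventually.of_forall fun n =>
      (edist_le_meanDist_add μ n o x).trans (by gcongr; exact hbound n))
  have hDo : D o ≤ C := liminf_le_of_frequently_le'
    (Eventually.of_forall hbound).frequently
  have hcompact : IsCompact {x | D x ≤ D o} := by
    refine (isCompact_closedBall o (C + C).toReal).of_isClosed_subset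
      (isClosed_le hcont continuous_const) fun x (hx : D x ≤ D o) => ?_
    rw [Metric.mem_closedBall, dist_edist]
    exact ENNReal.toReal_mono (ENNReal.add_ne_top.2 ⟨hC, hC⟩)
      ((hlower x).trans (by gcongr; exact hx.trans hDo))
  obtain ⟨z, hz, hminOn⟩ := hcompact.exists_isMinOn ⟨o, le_refl (D o)⟩ hcont.continuousOn
  have hmin : ∀ x, D z ≤ D x := fun x =>
    (le_total (D x) (D o)).elim (fun hx => hminOn hx) fun hx => le_trans hz hx
  refine ⟨{x | D x ≤ D z}, hcompact.of_isClosed_subset (isClosed_le hcont continuous_const)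
    fun x (hx : D x ≤ D z) => le_trans hx hz, ⟨z, le_refl (D z)⟩, fun x (hx : D x ≤ D z) => ?_⟩
  have heq := ae_eq_of_ae_le_of_lintegral_le (μ := μ) (f := fun _ => D x) (g := fun h => D (h • x))
    (ae_of_all _ fun h => hx.trans (hmin _))
    (by simpa using ((hx.trans (hmin o)).trans hDo).trans_lt hC.lt_top |>.ne)
    (hcont.comp (continuous_id.smul continuous_const)).measurable.aemeasurable
    (by simpa using lintegral_liminfMeanDist_le μ o x)
  filter_upwards [heq] with h hh
  exact hh.symm.trans_le hx

end Displacement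

lemma measSupp_subset {μ : Measure SL2} {F : Set SL2} (hF : IsClosed F) (h : ∀ᵐ g ∂μ, g ∈ F) :
    measSupp μ ⊆ F := by
  intro g hg
  by_contra hgF
  exact (hg Fᶜ hF.isOpen_compl hgF).ne' h

/-! ### The action on the hyperbolic plane -/

instance : ContinuousSMul SL2 UpperHalfPlane := UpperHalfPlane.instContinuousSMulSL2R

open UpperHalfPlane in
lemma exists_hyperbolic_midpoint (x y : ℍ) : ∃ m : ℍ, ∀ z : ℍ,
    Real.cosh (dist m z) * (2 * Real.cosh (dist x y / 2)) =
      Real.cosh (dist x z) + Real.cosh (dist y z) := by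
  have hx := x.im_pos
  have hy := y.im_pos
  set c := Real.cosh (dist x y / 2)
  have hc0 : 0 < c := Real.cosh_pos _
  have hcsq : 4 * x.im * y.im * c ^ 2 = (x.re - y.re) ^ 2 + (x.im + y.im) ^ 2 := by
    have h : Real.cosh (dist x y) = 2 * c ^ 2 - 1 := by
      rw [← mul_div_cancel₀ (dist x y) two_ne_zero, Real.cosh_two_mul, Real.sinh_sq]
      ring
    rw [cosh_dist'] at h
    field_simp at h
    linear_combination -h
  refine ⟨⟨⟨(x.re * y.im + y.re * x.im) / (x.im + y.im), 2 * x.im * y.im * c / (x.im + y.im)⟩,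
    by positivity⟩, fun z => ?_⟩
  have hz := z.im_pos
  simp only [cosh_dist', UpperHalfPlane.re, UpperHalfPlane.im] at *
  field_simp
  linear_combination (x : ℂ).im * (y : ℂ).im * hcsq

open UpperHalfPlane in
lemma exists_dist_lt_max {x y : ℍ} (hxy : x ≠ y) :
    ∃ m : ℍ, ∀ z, dist m z < max (dist x z) (dist y z) := by
  obtain ⟨m, hm⟩ := exists_hyperbolic_midpoint x y
  refine ⟨m, fun z => ?_⟩
  have hlt : 1 < Real.cosh (dist x y / 2) :=
    Real.one_lt_cosh.2 (div_pos (dist_pos.2 hxy) two_pos).ne'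
  have hcosh : Real.cosh (dist m z) < max (Real.cosh (dist x z)) (Real.cosh (dist y z)) := by
    nlinarith [hm z, Real.one_le_cosh (dist m z), le_max_left (Real.cosh (dist x z))
      (Real.cosh (dist y z)), le_max_right (Real.cosh (dist x z)) (Real.cosh (dist y z))]
  simpa [lt_max_iff, Real.cosh_lt_cosh, abs_of_nonneg dist_nonneg] using hcosh

open UpperHalfPlane in
lemma entries_of_smul_eq {g : SL2} {z : ℍ} (hg : g • z = z) :
    g 0 0 = g 1 1 + 2 * z.re * g 1 0 ∧ g 0 1 = -(z.re ^ 2 + z.im ^ 2) * g 1 0 := by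
  have hz : ((g 0 0 : ℂ) * z + g 0 1) / (g 1 0 * z + g 1 1) = z := by
    simpa [coe_specialLinearGroup_apply] using congrArg UpperHalfPlane.coe hg
  rw [div_eq_iff (mod_cast denom_ne_zero g z), Complex.ext_iff] at hz
  obtain ⟨hre, him⟩ :
      g 0 0 * z.re + g 0 1 = z.re * (g 1 0 * z.re + g 1 1) - z.im * (g 1 0 * z.im) ∧
        g 0 0 * z.im = z.re * (g 1 0 * z.im) + z.im * (g 1 0 * z.re + g 1 1) := by
    simpa using hz
  have h0 : g 0 0 = g 1 1 + 2 * z.re * g 1 0 :=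
    mul_right_cancel₀ z.im_pos.ne' (by linear_combination him)
  exact ⟨h0, by linear_combination hre - z.re * h0⟩

open UpperHalfPlane in
lemma mul_comm_of_smul_eq {g h : SL2} {z : ℍ} (hg : g • z = z) (hh : h • z = z) :
    g * h = h * g := by
  obtain ⟨hg0, hg1⟩ := entries_of_smul_eq hg
  obtain ⟨hh0, hh1⟩ := entries_of_smul_eq hh
  ext i j
  fin_cases i <;> fin_cases j <;>
    simp [Matrix.mul_apply, Fin.sum_univ_two, hg0, hg1, hh0, hh1] <;> ring

open UpperHalfPlane in
lemma dist_smul_I_le (g : SL2) : dist (g • I) I ≤ Real.log 4 + 2 * kappa g := by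
  have hcosh : Real.cosh (dist (g • I) I) ≤ 2 * opNorm g ^ 2 := by
    have hsq : ∀ i j, g i j ^ 2 ≤ opNorm g ^ 2 := fun i j =>
      sq_le_sq.2 ((abs_entry_le_opNorm g i j).trans (le_abs_self _))
    have hdet := det_fin_two_eq_one g
    have hw : ((g • I : ℍ) : ℂ) * (g 1 0 * Complex.I + g 1 1) = g 0 0 * Complex.I + g 0 1 := by
      rw [coe_specialLinearGroup_apply]
      exact div_mul_cancel₀ _ (mod_cast denom_ne_zero g I)
    obtain ⟨hre, him⟩ : (g • I).re * g 1 1 - (g • I).im * g 1 0 = g 0 1 ∧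
        (g • I).re * g 1 0 + (g • I).im * g 1 1 = g 0 0 := by
      simpa [Complex.ext_iff] using hw
    have hpos := (g • I).im_pos
    have him_mul : (g • I).im * (g 1 0 ^ 2 + g 1 1 ^ 2) = 1 := by
      linear_combination hdet + g 1 1 * him - g 1 0 * hre
    rw [cosh_dist', div_le_iff₀ (by simpa using hpos), I_re, I_im, sub_zero, mul_one, one_pow]
    calc (g • I).re ^ 2 + (g • I).im ^ 2 + 1
        = (g • I).im * (g 0 0 ^ 2 + g 0 1 ^ 2 + g 1 0 ^ 2 + g 1 1 ^ 2) := by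
          rw [← hre, ← him]
          linear_combination (-(g • I).re ^ 2 - (g • I).im ^ 2 - 1) * him_mul
      _ ≤ (g • I).im * (4 * opNorm g ^ 2) := by
          gcongr
          linarith [hsq 0 0, hsq 0 1, hsq 1 0, hsq 1 1]
      _ = 2 * opNorm g ^ 2 * (2 * (g • I).im) := by ring
  have hexp : Real.exp (dist (g • I) I) ≤ Real.exp (Real.log 4 + 2 * kappa g) := by
    rw [Real.exp_add, Real.exp_log four_pos, two_mul, Real.exp_add, exp_kappa, ← sq]
    rw [Real.cosh_eq] at hcosh
    linarith [Real.exp_pos (-dist (g • I) I)]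
  exact Real.exp_le_exp.1 hexp

open UpperHalfPlane in
theorem exists_lt_lintegral_kappa {μ : Measure SL2} [IsProbabilityMeasure μ]
    (hzd : ZariskiDense μ) {C : ENNReal} (hC : C ≠ ⊤) :
    ∃ n, C < ∫⁻ g, ENNReal.ofReal (kappa g) ∂convPow μ n := by
  by_contra! hbound
  have hmean : ∀ n, meanDist μ n I I ≤ ENNReal.ofReal (Real.log 4) + 2 * C := by
    intro n
    calc meanDist μ n I I
        ≤ ∫⁻ g, (ENNReal.ofReal (Real.log 4) + 2 * ENNReal.ofReal (kappa g)) ∂convPow μ n :=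
          lintegral_mono fun g => by
            rw [edist_dist, ← ENNReal.ofReal_ofNat, ← ENNReal.ofReal_mul zero_le_two,
              ← ENNReal.ofReal_add (by positivity) (by positivity [kappa_nonneg g])]
            exact ENNReal.ofReal_le_ofReal (dist_smul_I_le g)
      _ = ENNReal.ofReal (Real.log 4) + 2 * ∫⁻ g, ENNReal.ofReal (kappa g) ∂convPow μ n := by
          rw [lintegral_add_left measurable_const, lintegral_const_mul _ (by fun_prop)]
          simp
      _ ≤ _ := by gcongr; exact hbound n
  obtain ⟨Z, hZ, hne, hinv⟩ := exists_isCompact_forall_ae_smul_mem μ (by finiteness) hmean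
  obtain ⟨c, hc⟩ := exists_smul_eq_of_isCompact_of_mapsTo (fun _ _ => exists_dist_lt_max) hZ hne
    (S := measSupp μ) fun g hg x hx => measSupp_subset
      (hZ.isClosed.preimage (continuous_id.smul continuous_const)) (hinv x hx) hg
  exact hzd (isSolvable_closure_of_commute fun g hg h hh => mul_comm_of_smul_eq (hc g hg) (hc h hh))

/-! ### Stationary measures and drift on a compact space -/

section Compact

variable {X : Type*} [TopologicalSpace X] [CompactSpace X]

lemma exists_forall_abs_le_of_continuous {f : X → ℝ} (hf : Continuous f) : ∃ B, ∀ x, |f x| ≤ B := by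
  obtain ⟨B, hB⟩ := isCompact_univ.exists_bound_of_continuousOn hf.continuousOn
  exact ⟨B, fun x => hB x trivial⟩

lemma integrable_comp_of_compactSpace {Y : Type*} [TopologicalSpace Y] [MeasurableSpace Y]
    [OpensMeasurableSpace Y] {ρ : Measure Y} [IsFiniteMeasure ρ] {f : X → ℝ}
    (hf : Continuous f) {φ : Y → X} (hφ : Continuous φ) : Integrable (fun y => f (φ y)) ρ := by
  obtain ⟨B, hB⟩ := exists_forall_abs_le_of_continuous hf
  exact (integrable_const B).mono' (hf.comp hφ).aestronglyMeasurable (ae_of_all _ fun y => hB _)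

end Compact

section MarkovOp

variable {M X : Type*} [MeasurableSpace M]

/-- The mean increment of the cocycle `σ` from `x` under a step of law `ρ`. -/
def drift (σ : M → X → ℝ) (ρ : Measure M) (x : X) : ℝ := ∫ g, σ g x ∂ρ

/-- The Markov operator on functions on `X` attached to steps of law `ρ`. -/
def markovOp [SMul M X] (ρ : Measure M) (f : X → ℝ) (x : X) : ℝ := ∫ g, f (g • x) ∂ρ

lemma abs_markovOp_le [SMul M X] (ρ : Measure M) [IsProbabilityMeasure ρ] {f : X → ℝ} {B : ℝ}
    (hf : ∀ x, |f x| ≤ B) (x : X) : |markovOp ρ f x| ≤ B := by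
  simpa [markovOp] using norm_integral_le_of_norm_le_const (μ := ρ) (f := fun g => f (g • x))
    (ae_of_all _ fun g => hf _)

end MarkovOp

section Stationary

variable {M X : Type*} [Monoid M] [TopologicalSpace M] [TopologicalSpace X] [MulAction M X]

/-- A continuous additive cocycle `σ` over the action of `M` on `X`, bounded by a function `k`
of the acting element only. -/
structure IsDominatedCocycle (σ : M → X → ℝ) (k : M → ℝ) : Prop where
  continuous : Continuous (Function.uncurry σ)
  abs_le : ∀ g x, |σ g x| ≤ k g
  map_mul : ∀ g h x, σ (g * h) x = σ g (h • x) + σ h x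

namespace IsDominatedCocycle

variable {σ : M → X → ℝ} {k : M → ℝ}

lemma continuous_left (hσ : IsDominatedCocycle σ k) (x : X) : Continuous fun g => σ g x :=
  hσ.continuous.comp (Continuous.prodMk_left x)

lemma continuous_right (hσ : IsDominatedCocycle σ k) (g : M) : Continuous (σ g) :=
  hσ.continuous.comp (Continuous.prodMk_right g)

lemma map_one (hσ : IsDominatedCocycle σ k) (x : X) : σ 1 x = 0 := by
  have h := hσ.map_mul 1 1 x
  rwa [mul_one, one_smul, left_eq_add] at h

variable [MeasurableSpace M] [BorelSpace M]

lemma drift_dirac_one (hσ : IsDominatedCocycle σ k) (x : X) :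
    drift σ (Measure.dirac 1) x = 0 := by
  rw [drift, integral_dirac' _ _ (hσ.continuous_left x).stronglyMeasurable, hσ.map_one]

lemma integrable_left (hσ : IsDominatedCocycle σ k) {ρ : Measure M} (hk : Integrable k ρ)
    (x : X) : Integrable (fun g => σ g x) ρ :=
  hk.mono' (hσ.continuous_left x).aestronglyMeasurable (ae_of_all _ fun g => hσ.abs_le g x)

lemma continuous_drift [FirstCountableTopology X] (hσ : IsDominatedCocycle σ k)
    {ρ : Measure M} (hk : Integrable k ρ) : Continuous (drift σ ρ) :=
  continuous_of_dominated (fun x => (hσ.continuous_left x).aestronglyMeasurable)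
    (fun x => ae_of_all _ fun g => hσ.abs_le g x) hk (ae_of_all _ hσ.continuous_right)

end IsDominatedCocycle

variable [CompactSpace X] [MeasurableSpace M] [BorelSpace M] [ContinuousSMul M X]

section Convolution

variable (ρ : Measure M) [IsProbabilityMeasure ρ] {f : X → ℝ}

lemma continuous_markovOp [FirstCountableTopology X] (hf : Continuous f) :
    Continuous (markovOp ρ f) := by
  obtain ⟨B, hB⟩ := exists_forall_abs_le_of_continuous hf
  exact continuous_of_dominated (bound := fun _ => B)
    (fun x => Continuous.aestronglyMeasurable (by fun_prop))
    (fun x => ae_of_all _ fun g => hB _) (integrable_const _)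
    (ae_of_all _ fun g => hf.comp (continuous_const_smul g))

variable [SecondCountableTopology M] [ContinuousMul M] {μ : Measure M} [IsProbabilityMeasure μ]

lemma integral_mconv_symm {F : M → ℝ} (hF : Integrable F (μ ∗ₘ ρ)) :
    ∫ g, F g ∂(μ ∗ₘ ρ) = ∫ h, ∫ g, F (g * h) ∂μ ∂ρ := by
  rw [integral_mconv hF]
  exact integral_integral_swap ((integrable_map_measure hF.1 (by fun_prop)).1 hF)

lemma markovOp_mconv (hf : Continuous f) (x : X) :
    markovOp (μ ∗ₘ ρ) f x = markovOp ρ (markovOp μ f) x := by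
  have : IsProbabilityMeasure (μ ∗ₘ ρ) :=
    Measure.probabilitymeasure_of_probabilitymeasures_mconv _ _
  rw [markovOp, integral_mconv_symm ρ (integrable_comp_of_compactSpace hf (by fun_prop))]
  simp only [mul_smul, markovOp]

lemma IsDominatedCocycle.drift_mconv [FirstCountableTopology X] {σ : M → X → ℝ} {k : M → ℝ}
    (hσ : IsDominatedCocycle σ k) (hμ : Integrable k μ) (hρ : Integrable k ρ)
    (hμρ : Integrable k (μ ∗ₘ ρ)) (x : X) :
    drift σ (μ ∗ₘ ρ) x = markovOp ρ (drift σ μ) x + drift σ ρ x := by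
  rw [drift, integral_mconv_symm ρ (hσ.integrable_left hμρ x), markovOp, drift,
    ← integral_add (integrable_comp_of_compactSpace (hσ.continuous_drift hμ) (by fun_prop))
      (hσ.integrable_left hρ x)]
  refine integral_congr_ae (ae_of_all _ fun h => ?_)
  simp only [hσ.map_mul]
  rw [integral_add (hσ.integrable_left hμ _) (integrable_const _)]
  simp [drift]

lemma IsDominatedCocycle.sum_markovOp_drift [FirstCountableTopology X] {σ : M → X → ℝ}
    {k : M → ℝ} (hσ : IsDominatedCocycle σ k) (hk : ∀ n, Integrable k (convPow μ n)) (n : ℕ)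
    (x : X) :
    ∑ j ∈ Finset.range n, markovOp (convPow μ j) (drift σ μ) x = drift σ (convPow μ n) x := by
  induction n with
  | zero => rw [Finset.sum_range_zero, convPow, hσ.drift_dirac_one]
  | succ n ih =>
    rw [Finset.sum_range_succ, ih, convPow,
      hσ.drift_mconv _ (convPow_one μ ▸ hk 1) (hk n) (hk (n + 1)), add_comm]

end Convolution

variable [SecondCountableTopology M] [MeasurableSpace X] [BorelSpace X]

/-- `ν` is `μ`-stationary for the action of `M` on `X`: `μ * ν = ν`. -/
def IsStationary (μ : Measure M) (ν : Measure X) : Prop :=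
  (μ.prod ν).map (fun p => p.1 • p.2) = ν

variable {μ : Measure M} [IsProbabilityMeasure μ]

lemma integral_map_smul_prod {ν : Measure X} [IsProbabilityMeasure ν] {f : X → ℝ}
    (hf : Continuous f) :
    ∫ x, f x ∂(μ.prod ν).map (fun p => p.1 • p.2) = ∫ x, markovOp μ f x ∂ν := by
  have hsmul : Continuous fun p : M × X => p.1 • p.2 := continuous_smul
  rw [integral_map hsmul.measurable.aemeasurable hf.aestronglyMeasurable,
    integral_prod_symm _ (integrable_comp_of_compactSpace hf hsmul)]
  rfl

lemma IsStationary.integral_markovOp {ν : Measure X} [IsProbabilityMeasure ν]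
    (hν : IsStationary μ ν) {f : X → ℝ} (hf : Continuous f) :
    ∫ x, markovOp μ f x ∂ν = ∫ x, f x ∂ν := by
  rw [← integral_map_smul_prod hf, hν]

lemma isStationary_of_forall_integral_markovOp
    [TopologicalSpace.PseudoMetrizableSpace X] {ν : Measure X} [IsProbabilityMeasure ν]
    (h : ∀ f : X → ℝ, Continuous f → ∫ x, markovOp μ f x ∂ν = ∫ x, f x ∂ν) :
    IsStationary μ ν := by
  have : IsProbabilityMeasure ((μ.prod ν).map fun p => p.1 • p.2) :=
    Measure.isProbabilityMeasure_map (continuous_smul.measurable.aemeasurable)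
  refine ext_of_forall_integral_eq_of_IsFiniteMeasure fun f => ?_
  rw [integral_map_smul_prod f.continuous, h f f.continuous]

lemma exists_isStationary_of_tendsto [TopologicalSpace.PseudoMetrizableSpace X] [T2Space X]
    (W : ℕ → ProbabilityMeasure X)
    (hW : ∀ f : X → ℝ, Continuous f →
      Tendsto (fun n => ∫ x, markovOp μ f x ∂(W n : Measure X) - ∫ x, f x ∂(W n : Measure X))
        atTop (nhds 0))
    {φ : X → ℝ} (hφ : Continuous φ) (hle : ∀ n, ∫ x, φ x ∂(W n : Measure X) ≤ 0) :
    ∃ ν : Measure X, IsProbabilityMeasure ν ∧ IsStationary μ ν ∧ ∫ x, φ x ∂ν ≤ 0 := by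
  obtain ⟨ν, -, hν⟩ := isCompact_univ.ultrafilter_le_nhds ((hyperfilter ℕ).map W) (by simp)
  have hlim : ∀ f : X → ℝ, Continuous f → Tendsto (fun n => ∫ x, f x ∂(W n : Measure X))
      (hyperfilter ℕ : Filter ℕ) (nhds (∫ x, f x ∂(ν : Measure X))) := fun f hf =>
    (ProbabilityMeasure.tendsto_iff_forall_integral_tendsto.1 hν)
      (BoundedContinuousFunction.mkOfCompact ⟨f, hf⟩)
  refine ⟨ν, inferInstance, isStationary_of_forall_integral_markovOp fun f hf => ?_,
    le_of_tendsto (hlim φ hφ) (Eventually.of_forall hle)⟩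
  exact sub_eq_zero.1 (tendsto_nhds_unique ((hlim _ (continuous_markovOp μ hf)).sub (hlim f hf))
    ((hW f hf).mono_left Nat.hyperfilter_le_atTop))

/-- The average over `j ≤ n` of the laws at time `j` of the random walk started at `x`. -/
def cesaroLaw (μ : Measure M) (n : ℕ) (x : X) : Measure X :=
  ((n + 1 : ℕ) : ENNReal)⁻¹ • ∑ j ∈ Finset.range (n + 1), (convPow μ j).map (· • x)

variable [ContinuousMul M]

instance isProbabilityMeasure_cesaroLaw (n : ℕ) (x : X) :
    IsProbabilityMeasure (cesaroLaw μ n x) := by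
  have : ∀ j, IsProbabilityMeasure ((convPow μ j).map (· • x)) := fun j =>
    Measure.isProbabilityMeasure_map (Continuous.aemeasurable (by fun_prop))
  constructor
  simp only [cesaroLaw, Measure.smul_apply, Measure.coe_finsetSum, Finset.sum_apply, measure_univ,
    Finset.sum_const, Finset.card_range, smul_eq_mul, nsmul_eq_mul, mul_one]
  exact ENNReal.inv_mul_cancel (by simp) (by simp)

lemma integral_cesaroLaw {f : X → ℝ} (hf : Continuous f) (n : ℕ) (x : X) :
    ∫ y, f y ∂cesaroLaw μ n x =
      ((n : ℝ) + 1)⁻¹ * ∑ j ∈ Finset.range (n + 1), markovOp (convPow μ j) f x := by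
  have hsmul : Continuous fun g : M => g • x := by fun_prop
  rw [cesaroLaw, integral_smul_measure, integral_finsetSum_measure fun j _ => ?_, smul_eq_mul]
  · congr 1
    · simp
      norm_cast
    · refine Finset.sum_congr rfl fun j _ => ?_
      rw [integral_map hsmul.aemeasurable hf.aestronglyMeasurable, markovOp]
  · rw [integrable_map_measure hf.aestronglyMeasurable hsmul.aemeasurable]
    exact integrable_comp_of_compactSpace hf hsmul

variable [TopologicalSpace.PseudoMetrizableSpace X]

lemma tendsto_integral_cesaroLaw_markovOp_sub {f : X → ℝ} (hf : Continuous f) (v : ℕ → X) :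
    Tendsto (fun n => ∫ x, markovOp μ f x ∂cesaroLaw μ n (v n) - ∫ x, f x ∂cesaroLaw μ n (v n))
      atTop (nhds 0) := by
  obtain ⟨B, hB⟩ := exists_forall_abs_le_of_continuous hf
  have hlim : Tendsto (fun n : ℕ => ((n : ℝ) + 1)⁻¹ * (B + B)) atTop (nhds 0) := by
    simpa using tendsto_one_div_add_atTop_nhds_zero_nat (𝕜 := ℝ) |>.mul_const (B + B)
  refine squeeze_zero_norm (fun n => ?_) hlim
  have hsum : ∑ j ∈ Finset.range (n + 1), markovOp (convPow μ j) (markovOp μ f) (v n) -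
      ∑ j ∈ Finset.range (n + 1), markovOp (convPow μ j) f (v n) =
      markovOp (convPow μ (n + 1)) f (v n) - markovOp (convPow μ 0) f (v n) := by
    rw [← Finset.sum_range_sub fun j => markovOp (convPow μ j) f (v n), Finset.sum_sub_distrib]
    simp only [convPow, markovOp_mconv _ hf]
  rw [integral_cesaroLaw hf, integral_cesaroLaw (continuous_markovOp μ hf), ← mul_sub, hsum,
    norm_mul, norm_inv, Real.norm_of_nonneg (by positivity)]
  gcongr
  exact (abs_sub _ _).trans (add_le_add (abs_markovOp_le _ hB _) (abs_markovOp_le _ hB _))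

variable {σ : M → X → ℝ} {k : M → ℝ}

lemma IsDominatedCocycle.integral_drift_convPow (hσ : IsDominatedCocycle σ k)
    (hk : ∀ n, Integrable k (convPow μ n)) {ν : Measure X} [IsProbabilityMeasure ν]
    (hν : IsStationary μ ν) (n : ℕ) :
    ∫ x, drift σ (convPow μ n) x ∂ν = n * ∫ x, drift σ μ x ∂ν := by
  have hμ : Integrable k μ := convPow_one μ ▸ hk 1
  induction n with
  | zero => simp [convPow, hσ.drift_dirac_one]
  | succ n ih =>
    have hint : ∀ {f : X → ℝ}, Continuous f → Integrable f ν := fun hf =>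
      integrable_comp_of_compactSpace hf continuous_id
    simp only [convPow_succ_right,
      hσ.drift_mconv μ (hk n) hμ (convPow_succ_right μ n ▸ hk (n + 1))]
    rw [integral_add (hint (continuous_markovOp μ (hσ.continuous_drift (hk n))))
      (hint (hσ.continuous_drift hμ)), hν.integral_markovOp (hσ.continuous_drift (hk n)), ih]
    push_cast
    ring

theorem IsDominatedCocycle.exists_isStationary_forall_integral_drift_nonpos [T2Space X]
    (hσ : IsDominatedCocycle σ k) (hk : ∀ n, Integrable k (convPow μ n))
    (hdrift : ∀ n, ∃ x, drift σ (convPow μ n) x ≤ 0) :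
    ∃ ν : Measure X, IsProbabilityMeasure ν ∧ IsStationary μ ν ∧
      ∀ n, ∫ x, drift σ (convPow μ n) x ∂ν ≤ 0 := by
  choose v hv using fun n => hdrift (n + 1)
  have hμ : Integrable k μ := convPow_one μ ▸ hk 1
  obtain ⟨ν, hprob, hν, hneg⟩ := exists_isStationary_of_tendsto (μ := μ)
    (fun n => ⟨cesaroLaw μ n (v n), inferInstance⟩)
    (fun f hf => tendsto_integral_cesaroLaw_markovOp_sub hf v) (hσ.continuous_drift hμ) fun n => by
      rw [ProbabilityMeasure.coe_mk, integral_cesaroLaw (hσ.continuous_drift hμ),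
        hσ.sum_markovOp_drift hk]
      exact mul_nonpos_of_nonneg_of_nonpos (by positivity) (hv n)
  refine ⟨ν, hprob, hν, fun n => ?_⟩
  rw [hσ.integral_drift_convPow hk hν]
  exact mul_nonpos_of_nonneg_of_nonpos n.cast_nonneg hneg

end Stationary

/-! ### The action on the circle -/

/-- Unit vectors of the plane, a double cover of the projective line. -/
abbrev UnitVec : Type := Metric.sphere (0 : Plane) 1

namespace UnitVec

lemma coe_ne_zero (u : UnitVec) : (u : Plane) ≠ 0 := ne_zero_of_mem_unit_sphere u

lemma norm_toCLM_pos (g : SL2) (u : UnitVec) : 0 < ‖toCLM g u‖ :=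
  norm_pos_iff.2 (toCLM_ne_zero g u.coe_ne_zero)

instance : SMul SL2 UnitVec where
  smul g u := ⟨‖toCLM g u‖⁻¹ • toCLM g u, by
    rw [mem_sphere_zero_iff_norm, norm_smul, norm_inv, norm_norm,
      inv_mul_cancel₀ (norm_toCLM_pos g u).ne']⟩

lemma coe_smul (g : SL2) (u : UnitVec) :
    ((g • u : UnitVec) : Plane) = ‖toCLM g u‖⁻¹ • toCLM g u := rfl

lemma norm_toCLM_smul (g h : SL2) (u : UnitVec) :
    ‖toCLM g (h • u : UnitVec)‖ = ‖toCLM (g * h) u‖ / ‖toCLM h u‖ := by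
  rw [coe_smul, map_smul, norm_smul, norm_inv, norm_norm, toCLM_mul_apply, inv_mul_eq_div]

instance : MulAction SL2 UnitVec where
  one_smul u := Subtype.ext (by simp [coe_smul])
  mul_smul g h u := by
    have hpos := (norm_toCLM_pos h u).ne'
    rw [Subtype.ext_iff, coe_smul, coe_smul g, norm_toCLM_smul, coe_smul, map_smul,
      toCLM_mul_apply, smul_smul]
    congr 1
    field_simp

lemma continuous_toCLM_apply : Continuous fun p : SL2 × UnitVec => toCLM p.1 (p.2 : Plane) := by
  fun_prop

instance : ContinuousSMul SL2 UnitVec where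
  continuous_smul := Continuous.subtype_mk
    ((continuous_toCLM_apply.norm.inv₀ fun p => (norm_toCLM_pos p.1 p.2).ne').smul
      continuous_toCLM_apply) _

end UnitVec

/-- The norm cocycle on unit vectors. -/
def logNorm (g : SL2) (u : UnitVec) : ℝ := Real.log ‖toCLM g u‖

lemma exp_logNorm (g : SL2) (u : UnitVec) : Real.exp (logNorm g u) = ‖toCLM g u‖ :=
  Real.exp_log (u.norm_toCLM_pos g)

lemma abs_logNorm_le (g : SL2) (u : UnitVec) : |logNorm g u| ≤ kappa g := by
  have hpos := u.norm_toCLM_pos g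
  have hupper := norm_toCLM_le g u
  have hlower := norm_le_opNorm_mul_norm_toCLM g u
  rw [norm_eq_of_mem_sphere] at hupper hlower
  refine abs_le.2 ⟨?_, Real.log_le_log hpos (by simpa using hupper)⟩
  have hlog := Real.log_le_log one_pos hlower
  rw [Real.log_one, Real.log_mul (opNorm_pos g).ne' hpos.ne'] at hlog
  rw [logNorm, kappa]
  linarith

lemma isDominatedCocycle_logNorm : IsDominatedCocycle logNorm kappa where
  continuous := UnitVec.continuous_toCLM_apply.norm.log fun p => (p.2.norm_toCLM_pos p.1).ne'
  abs_le := abs_logNorm_le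
  map_mul g h u := by
    rw [logNorm, logNorm, logNorm, UnitVec.norm_toCLM_smul,
      Real.log_div (u.norm_toCLM_pos _).ne' (u.norm_toCLM_pos _).ne', sub_add_cancel]

/-! ### Stationary measures charge no line by one half -/

/-- The unit vectors parallel to `y`. -/
def parallelSet (y : Plane) : Set UnitVec := {u | area u y = 0}

lemma isClosed_parallelSet (y : Plane) : IsClosed (parallelSet y) :=
  isClosed_eq (by unfold area; fun_prop) continuous_const

lemma disjoint_parallelSet {y z : Plane} (h : area y z ≠ 0) :
    Disjoint (parallelSet y) (parallelSet z) :=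
  Set.disjoint_left.2 fun u (huy : area u y = 0) huz =>
    h (area_eq_zero_trans u.coe_ne_zero (by rw [area_swap, huy, neg_zero]) huz)

lemma parallelSet_subset {y z : Plane} (hy : y ≠ 0) (h : area y z = 0) :
    parallelSet y ⊆ parallelSet z := fun _ hu => area_eq_zero_trans hy hu h

lemma smul_mem_parallelSet_iff (g : SL2) (u : UnitVec) (y : Plane) :
    g • u ∈ parallelSet y ↔ u ∈ parallelSet (toCLM g⁻¹ y) := by
  change area (g • u : UnitVec) y = 0 ↔ area u (toCLM g⁻¹ y) = 0
  rw [UnitVec.coe_smul, area_smul_left, area_toCLM_left, mul_eq_zero, inv_eq_zero,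
    or_iff_right (u.norm_toCLM_pos g).ne']

section Stationary

variable {μ : Measure SL2} [IsProbabilityMeasure μ] {ν : Measure UnitVec} [IsProbabilityMeasure ν]

lemma IsStationary.ae_measure_parallelSet_eq (hν : IsStationary μ ν) {y : Plane} (hy : y ≠ 0)
    (hmax : ∀ z ≠ 0, ν (parallelSet z) ≤ ν (parallelSet y)) :
    ∀ᵐ g ∂μ, ν (parallelSet (toCLM g⁻¹ y)) = ν (parallelSet y) := by
  have hsmul : Measurable fun p : SL2 × UnitVec => p.1 • p.2 := continuous_smul.measurable
  have hmeas := (isClosed_parallelSet y).measurableSet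
  have hsection (g : SL2) :
      Prod.mk g ⁻¹' ((fun p : SL2 × UnitVec => p.1 • p.2) ⁻¹' parallelSet y) =
        parallelSet (toCLM g⁻¹ y) :=
    Set.ext fun u => smul_mem_parallelSet_iff g u y
  have hmean : ∫⁻ g, ν (parallelSet (toCLM g⁻¹ y)) ∂μ = ν (parallelSet y) := by
    conv_rhs => rw [← hν, Measure.map_apply hsmul hmeas, Measure.prod_apply (hsmul hmeas)]
    simp only [hsection]
  refine ae_eq_of_ae_le_of_lintegral_le (ae_of_all _ fun g => hmax _ (toCLM_ne_zero _ hy)) ?_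
    aemeasurable_const ?_
  · rw [hmean]
    exact measure_ne_top _ _
  · rw [hmean, lintegral_const, measure_univ, mul_one]

variable (ν) in
lemma measureReal_parallelSet_add_le {y z : Plane} (h : area y z ≠ 0) :
    ν.real (parallelSet y) + ν.real (parallelSet z) ≤ 1 := by
  rw [← measureReal_union (disjoint_parallelSet h) (isClosed_parallelSet z).measurableSet]
  exact measureReal_le_one

variable (ν) in
lemma measureReal_parallelSet_add_add_le {y z w : Plane} (hyz : area y z ≠ 0)
    (hwy : area w y ≠ 0) (hwz : area w z ≠ 0) :
    ν.real (parallelSet w) + (ν.real (parallelSet y) + ν.real (parallelSet z)) ≤ 1 := by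
  have hmeas (x : Plane) := (isClosed_parallelSet x).measurableSet
  rw [← measureReal_union (disjoint_parallelSet hyz) (hmeas z),
    ← measureReal_union ((disjoint_parallelSet hwy).union_right (disjoint_parallelSet hwz))
      ((hmeas y).union (hmeas z))]
  exact measureReal_le_one

lemma IsStationary.ae_half_le_measureReal_parallelSet (hν : IsStationary μ ν) {y : Plane}
    (hy : y ≠ 0) (hhalf : 1 / 2 ≤ ν.real (parallelSet y)) :
    ∀ᵐ g ∂μ, 1 / 2 ≤ ν.real (parallelSet (toCLM g⁻¹ y)) := by
  have hmax : ∀ z ≠ 0, ν (parallelSet z) ≤ ν (parallelSet y) := by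
    intro z hz
    by_cases hzy : area z y = 0
    · exact measure_mono (parallelSet_subset hz hzy)
    · rw [← ENNReal.toReal_le_toReal (measure_ne_top _ _) (measure_ne_top _ _)]
      change ν.real _ ≤ ν.real _
      linarith [measureReal_parallelSet_add_le ν hzy]
  filter_upwards [hν.ae_measure_parallelSet_eq hy hmax] with g hg
  rwa [measureReal_def, hg]

lemma isClosed_setOf_mapsLine_inv (u v : Plane) : IsClosed {g : SL2 | MapsLine g⁻¹ u v} :=
  isClosed_eq (by unfold area; fun_prop) continuous_const

lemma exists_perm_of_forall_exists_mapsLine {ℓ : Bool → Plane}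
    (hℓ : area (ℓ false) (ℓ true) ≠ 0) {g : SL2} (h : ∀ b, ∃ b', MapsLine g (ℓ b) (ℓ b')) :
    ∃ σ : Equiv.Perm Bool, ∀ b, MapsLine g (ℓ b) (ℓ (σ b)) := by
  have hne := ne_zero_of_area_ne_zero hℓ
  choose f hf using h
  have hinj : f false ≠ f true := fun heq => by
    have hfalse := hf false
    rw [MapsLine, heq, area_swap, neg_eq_zero] at hfalse
    have hparallel := area_eq_zero_trans (hne _) (hf true) hfalse
    rw [area_toCLM, area_swap, neg_eq_zero] at hparallel
    exact hℓ hparallel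
  have hbij : Function.Injective f := by
    rintro (_ | _) (_ | _) hb <;> first | rfl | exact absurd hb hinj | exact absurd hb.symm hinj
  exact ⟨Equiv.ofBijective f (Finite.injective_iff_bijective.1 hbij), hf⟩

lemma IsStationary.exists_mapsLine_of_mem_measSupp (hν : IsStationary μ ν) {ι : Type*} [Finite ι]
    {ℓ : ι → Plane} {i : ι} (hi : ℓ i ≠ 0) (hhalf : 1 / 2 ≤ ν.real (parallelSet (ℓ i)))
    (hℓ : ∀ w ≠ 0, 1 / 2 ≤ ν.real (parallelSet w) → ∃ j, area w (ℓ j) = 0) {g : SL2}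
    (hg : g ∈ measSupp μ) : ∃ j, MapsLine g⁻¹ (ℓ i) (ℓ j) := by
  have hsupp : measSupp μ ⊆ ⋃ j, {g : SL2 | MapsLine g⁻¹ (ℓ i) (ℓ j)} := by
    refine measSupp_subset (isClosed_iUnion_of_finite fun j => isClosed_setOf_mapsLine_inv _ _) ?_
    filter_upwards [hν.ae_half_le_measureReal_parallelSet hi hhalf] with g hg
    exact Set.mem_iUnion.2 (hℓ _ (toCLM_ne_zero _ hi) hg)
  obtain ⟨j, hj⟩ := Set.mem_iUnion.1 (hsupp hg)
  exact ⟨j, hj⟩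

theorem IsStationary.measureReal_parallelSet_lt_half (hν : IsStationary μ ν)
    (hzd : ZariskiDense μ) {y : Plane} (hy : y ≠ 0) : ν.real (parallelSet y) < 1 / 2 := by
  by_contra! hyhalf
  by_cases hex : ∃ z, area y z ≠ 0 ∧ 1 / 2 ≤ ν.real (parallelSet z)
  · obtain ⟨z, hyz, hzhalf⟩ := hex
    let ℓ : Bool → Plane := fun b => bif b then z else y
    have hne : ∀ b, ℓ b ≠ 0 := ne_zero_of_area_ne_zero hyz
    have hℓhalf : ∀ b, 1 / 2 ≤ ν.real (parallelSet (ℓ b)) := Bool.forall_bool.2 ⟨hyhalf, hzhalf⟩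
    have hthird : ∀ w ≠ 0, 1 / 2 ≤ ν.real (parallelSet w) → ∃ b, area w (ℓ b) = 0 := by
      intro w _ hw
      by_contra! hne
      linarith [measureReal_parallelSet_add_add_le ν hyz (hne false) (hne true)]
    refine hzd (isSolvable_closure_of_mapsLine_perm (ℓ := ℓ) hyz fun g hg => ?_)
    obtain ⟨σ, hσ⟩ := exists_perm_of_forall_exists_mapsLine hyz fun b =>
      hν.exists_mapsLine_of_mem_measSupp (hne b) (hℓhalf b) hthird hg
    exact ⟨σ⁻¹, fun b => by simpa using (hσ (σ⁻¹ b)).inv⟩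
  · push Not at hex
    refine hzd (isSolvable_closure_of_mapsLine hy fun g hg => ?_)
    have hparallel : ∀ w ≠ 0, 1 / 2 ≤ ν.real (parallelSet w) → ∃ _ : Unit, area w y = 0 := by
      refine fun w _ hw => ⟨(), ?_⟩
      rw [area_swap, neg_eq_zero]
      exact by_contra fun hyw => (hex w hyw).not_ge hw
    obtain ⟨-, hgy⟩ := hν.exists_mapsLine_of_mem_measSupp (ℓ := fun _ => y) (i := ()) hy hyhalf
      hparallel hg
    simpa using hgy.inv

end Stationary

/-! ### Positivity of the drift -/

section Drift

variable {ν : Measure UnitVec} [IsProbabilityMeasure ν]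

/-- The unit vectors whose direction is within sine distance `r` of that of `y`. -/
def nearSet (y : UnitVec) (r : ℝ) : Set UnitVec := {u | |area u y| ≤ r}

lemma nearSet_mono (y : UnitVec) {r s : ℝ} (hrs : r ≤ s) : nearSet y r ⊆ nearSet y s :=
  fun _ (hu : |_| ≤ r) => hu.trans hrs

lemma nearSet_subset_nearSet_add_dist (y z : UnitVec) (r : ℝ) :
    nearSet z r ⊆ nearSet y (r + dist z y) := by
  intro u (hu : |area u z| ≤ r)
  have hsub := abs_area_le (u : Plane) (z - y)
  rw [area_sub_right, norm_eq_of_mem_sphere, one_mul, ← dist_eq_norm, ← Subtype.dist_eq,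
    abs_sub_comm] at hsub
  exact (sub_le_iff_le_add'.1 ((abs_sub_abs_le_abs_sub _ _).trans hsub)).trans (by gcongr)

lemma biInter_nearSet (y : UnitVec) : ⋂ r > 0, nearSet y r = parallelSet y := by
  ext u
  simp only [Set.mem_iInter₂]
  exact ⟨fun hu => abs_nonpos_iff.1 (le_of_forall_gt_imp_ge_of_dense hu),
    fun (hu : area u y = 0) r hr => show |area u y| ≤ r by simpa [hu] using hr.le⟩

lemma exists_measureReal_nearSet_lt {w : ℝ} {y : UnitVec} (h : ν.real (parallelSet y) < w) :
    ∃ r > 0, ν.real (nearSet y r) < w := by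
  have hlim := tendsto_measure_biInter_gt (μ := ν) (s := nearSet y) (a := 0)
    (fun r _ => (isClosed_le (by unfold area; fun_prop) continuous_const).nullMeasurableSet)
    (fun _ _ _ hij => nearSet_mono y hij) ⟨1, one_pos, measure_ne_top _ _⟩
  rw [biInter_nearSet] at hlim
  obtain ⟨r, hr, hr0⟩ := ((((ENNReal.tendsto_toReal (measure_ne_top _ _)).comp hlim).eventually
    (gt_mem_nhds h)).and self_mem_nhdsWithin).exists
  exact ⟨r, hr0, hr⟩

lemma exists_forall_measureReal_nearSet_le {w : ℝ}
    (h : ∀ y : UnitVec, ν.real (parallelSet y) < w) :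
    ∃ r > 0, ∃ w' < w, ∀ y, ν.real (nearSet y r) ≤ w' := by
  by_contra! hcon
  have hstep (n : ℕ) : (0 : ℝ) < 1 / (n + 1) := Nat.one_div_pos_of_nat
  choose y hy using fun n : ℕ => hcon _ (hstep n) (w - 1 / (n + 1)) (by linarith [hstep n])
  obtain ⟨z, -, φ, hφ, hlim⟩ := isCompact_univ.tendsto_subseq fun n => Set.mem_univ (y n)
  obtain ⟨r, hr, hrw⟩ := exists_measureReal_nearSet_lt (h z)
  have hstep_lim : Tendsto (fun n => (1 : ℝ) / (φ n + 1)) atTop (nhds 0) :=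
    tendsto_one_div_add_atTop_nhds_zero_nat.comp hφ.tendsto_atTop
  have hradius : Tendsto (fun n => 1 / ((φ n : ℝ) + 1) + dist (y (φ n)) z) atTop (nhds 0) := by
    simpa using hstep_lim.add (tendsto_iff_dist_tendsto_zero.1 hlim)
  refine hrw.not_ge (le_of_tendsto (by simpa only [sub_zero] using hstep_lim.const_sub w) ?_)
  filter_upwards [hradius.eventually (gt_mem_nhds hr)] with n hn
  exact (hy (φ n)).le.trans (measureReal_mono
    ((nearSet_subset_nearSet_add_dist z _ _).trans (nearSet_mono z hn.le)))

lemma measureReal_setOf_norm_toCLM_lt_le {r w : ℝ} (h : ∀ y, ν.real (nearSet y (2 * r)) ≤ w)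
    (g : SL2) : ν.real {u : UnitVec | ‖toCLM g u‖ < r * opNorm g} ≤ w := by
  rcases Set.eq_empty_or_nonempty {u : UnitVec | ‖toCLM g u‖ < r * opNorm g} with hempty | ⟨y, hy⟩
  · obtain ⟨y⟩ := nonempty_of_isProbabilityMeasure ν
    rw [hempty, measureReal_empty]
    exact measureReal_nonneg.trans (h y)
  · refine (measureReal_mono fun u hu => ?_).trans (h y)
    rw [Set.mem_ofPred_eq] at hu hy
    have harea := opNorm_mul_abs_area_le g u y
    rw [norm_eq_of_mem_sphere, norm_eq_of_mem_sphere, one_mul, one_mul] at harea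
    exact le_of_mul_le_mul_left (by linarith) (opNorm_pos g)

lemma mul_kappa_add_log_le_integral_logNorm {r w : ℝ} (hr : 0 < r) (hr1 : r ≤ 1)
    (h : ∀ y, ν.real (nearSet y (2 * r)) ≤ w) (g : SL2) :
    (1 - 2 * w) * kappa g + Real.log r ≤ ∫ u, logNorm g u ∂ν := by
  set A : Set UnitVec := {u | ‖toCLM g u‖ < r * opNorm g}
  have hAmeas : MeasurableSet A := (isOpen_lt (by fun_prop) continuous_const).measurableSet
  have hlower : ∀ u, kappa g + Real.log r - A.indicator (fun _ => 2 * kappa g) u ≤ logNorm g u := by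
    intro u
    by_cases hu : u ∈ A
    · rw [Set.indicator_of_mem hu]
      linarith [(abs_le.1 (abs_logNorm_le g u)).1, Real.log_nonpos hr.le hr1]
    · rw [Set.indicator_of_notMem hu, sub_zero, kappa, add_comm,
        ← Real.log_mul hr.ne' (opNorm_pos g).ne']
      exact Real.log_le_log (mul_pos hr (opNorm_pos g)) (not_lt.1 hu)
  have hind : Integrable (A.indicator fun _ => 2 * kappa g) ν :=
    (integrable_const _).indicator hAmeas
  calc (1 - 2 * w) * kappa g + Real.log r
      ≤ kappa g + Real.log r - ν.real A * (2 * kappa g) := by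
        nlinarith [mul_le_mul_of_nonneg_right (measureReal_setOf_norm_toCLM_lt_le h g)
          (kappa_nonneg g)]
    _ = ∫ u, (kappa g + Real.log r - A.indicator (fun _ => 2 * kappa g) u) ∂ν := by
        rw [integral_sub (integrable_const _) hind, integral_indicator_const _ hAmeas]
        simp
    _ ≤ ∫ u, logNorm g u ∂ν :=
        integral_mono ((integrable_const _).sub hind) (integrable_comp_of_compactSpace
          (isDominatedCocycle_logNorm.continuous_right g) continuous_id) hlower

lemma integral_drift_logNorm (ρ : Measure SL2) [IsProbabilityMeasure ρ] (hρ : Integrable kappa ρ) :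
    Integrable (fun g => ∫ u, logNorm g u ∂ν) ρ ∧
      ∫ u, drift logNorm ρ u ∂ν = ∫ g, ∫ u, logNorm g u ∂ν ∂ρ := by
  have hint : Integrable (Function.uncurry fun (u : UnitVec) (g : SL2) => logNorm g u)
      (ν.prod ρ) :=
    (hρ.comp_snd ν).mono' (isDominatedCocycle_logNorm.continuous.comp
      continuous_swap).aestronglyMeasurable (ae_of_all _ fun p => abs_logNorm_le _ _)
  exact ⟨hint.integral_prod_right, integral_integral_swap hint⟩

lemma mul_integral_kappa_add_log_le {ρ : Measure SL2} [IsProbabilityMeasure ρ]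
    (hρ : Integrable kappa ρ) {r w : ℝ} (hr : 0 < r) (hr1 : r ≤ 1)
    (h : ∀ y, ν.real (nearSet y (2 * r)) ≤ w) :
    (1 - 2 * w) * ∫ g, kappa g ∂ρ + Real.log r ≤ ∫ u, drift logNorm ρ u ∂ν := by
  obtain ⟨hint, hswap⟩ := integral_drift_logNorm (ν := ν) ρ hρ
  have hmono := integral_mono ((hρ.const_mul _).add (integrable_const _)) hint
    (mul_kappa_add_log_le_integral_logNorm hr hr1 h)
  simp only [Pi.add_apply] at hmono
  rwa [integral_add (hρ.const_mul _) (integrable_const _), integral_const_mul, integral_const,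
    probReal_univ, one_smul, ← hswap] at hmono

end Drift

theorem exists_pos_forall_le_drift_logNorm {μ : Measure SL2} [IsProbabilityMeasure μ]
    (hzd : ZariskiDense μ) (hk : ∀ n, Integrable kappa (convPow μ n)) :
    ∃ n, ∃ l > 0, ∀ u, l ≤ drift logNorm (convPow μ n) u := by
  by_contra! hcon
  have hmin : ∀ n, ∃ u, drift logNorm (convPow μ n) u ≤ 0 := by
    intro n
    obtain ⟨v, hv⟩ := NormedSpace.sphere_nonempty (x := (0 : Plane)).2 zero_le_one
    obtain ⟨u, -, hu⟩ := isCompact_univ.exists_isMinOn ⟨(⟨v, hv⟩ : UnitVec), trivial⟩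
      (isDominatedCocycle_logNorm.continuous_drift (hk n)).continuousOn
    refine ⟨u, le_of_not_gt fun hpos => ?_⟩
    obtain ⟨z, hz⟩ := hcon n _ hpos
    exact hz.not_ge (hu trivial)
  obtain ⟨ν, _, hν, hnonpos⟩ :=
    isDominatedCocycle_logNorm.exists_isStationary_forall_integral_drift_nonpos hk hmin
  obtain ⟨r₀, hr₀, w, hw, hnear⟩ := exists_forall_measureReal_nearSet_le fun y =>
    hν.measureReal_parallelSet_lt_half hzd y.coe_ne_zero
  set r := min (r₀ / 2) 1
  have hr : 0 < r := lt_min (half_pos hr₀) one_pos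
  have hnear' : ∀ y, ν.real (nearSet y (2 * r)) ≤ w := fun y =>
    (measureReal_mono (nearSet_mono y (by linarith [min_le_left (r₀ / 2) 1]))).trans (hnear y)
  obtain ⟨n, hn⟩ := exists_lt_lintegral_kappa hzd
    (ENNReal.ofReal_ne_top (r := -Real.log r / (1 - 2 * w)))
  rw [← ofReal_integral_eq_lintegral_ofReal (hk n) (ae_of_all _ kappa_nonneg)] at hn
  have hlarge := (ENNReal.ofReal_lt_ofReal_iff'.1 hn).1
  rw [div_lt_iff₀' (by linarith)] at hlarge
  linarith [hnonpos n, mul_integral_kappa_add_log_le (hk n) hr (min_le_right _ _) hnear']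

/-! ### Exponential contraction -/

/-- The mean of `‖gu‖ ^ (-ε)` over a step `g` of law `ρ`; its exponential decay along the walk is
the quantitative form of the positive drift. -/
def inverseMoment (ρ : Measure SL2) (ε : ℝ) (u : UnitVec) : ENNReal :=
  ∫⁻ g, ENNReal.ofReal (‖toCLM g u‖ ^ (-ε)) ∂ρ

lemma norm_toCLM_rpow_eq_exp (g : SL2) (u : UnitVec) (ε : ℝ) :
    ‖toCLM g u‖ ^ ε = Real.exp (ε * logNorm g u) := by
  rw [← exp_logNorm, ← Real.exp_mul, mul_comm]

lemma norm_toCLM_rpow_neg_le (g : SL2) (u : UnitVec) {ε : ℝ} (hε : 0 ≤ ε) :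
    ‖toCLM g u‖ ^ (-ε) ≤ opNorm g ^ ε := by
  rw [norm_toCLM_rpow_eq_exp, ← exp_kappa, ← Real.exp_mul, Real.exp_le_exp]
  nlinarith [(abs_le.1 (abs_logNorm_le g u)).1]

lemma measurable_ofReal_norm_toCLM_rpow (u : UnitVec) (ε : ℝ) :
    Measurable fun g : SL2 => ENNReal.ofReal (‖toCLM g u‖ ^ ε) := by
  have hnorm : Measurable fun g : SL2 => ‖toCLM g u‖ := Continuous.measurable (by fun_prop)
  exact (hnorm.pow_const ε).ennreal_ofReal

lemma inverseMoment_le_expMoment (ρ : Measure SL2) {ε : ℝ} (hε : 0 ≤ ε) (u : UnitVec) :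
    inverseMoment ρ ε u ≤ expMoment ρ ε :=
  lintegral_mono fun g => ENNReal.ofReal_le_ofReal (norm_toCLM_rpow_neg_le g u hε)

lemma inverseMoment_mconv_le (μ ν : Measure SL2) [SFinite μ] [SFinite ν] (ε : ℝ) (u : UnitVec) :
    inverseMoment (μ ∗ₘ ν) ε u ≤ (⨆ v, inverseMoment μ ε v) * inverseMoment ν ε u := by
  have hcocycle (g h : SL2) : ENNReal.ofReal (‖toCLM (g * h) u‖ ^ (-ε)) =
      ENNReal.ofReal (‖toCLM g (h • u : UnitVec)‖ ^ (-ε)) *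
        ENNReal.ofReal (‖toCLM h u‖ ^ (-ε)) := by
    rw [← ENNReal.ofReal_mul (by positivity), UnitVec.norm_toCLM_smul,
      ← Real.mul_rpow (by positivity) (norm_nonneg _), div_mul_cancel₀ _ (u.norm_toCLM_pos h).ne']
  have hmeas : Measurable fun p : SL2 × SL2 =>
      ENNReal.ofReal (‖toCLM (p.1 * p.2) u‖ ^ (-ε)) :=
    (measurable_ofReal_norm_toCLM_rpow u (-ε)).comp measurable_mul
  calc inverseMoment (μ ∗ₘ ν) ε u
      = ∫⁻ h, inverseMoment μ ε (h • u) * ENNReal.ofReal (‖toCLM h u‖ ^ (-ε)) ∂ν := by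
        rw [inverseMoment, Measure.lintegral_mconv (measurable_ofReal_norm_toCLM_rpow u _),
          lintegral_lintegral_swap hmeas.aemeasurable]
        simp only [hcocycle, inverseMoment,
          lintegral_mul_const _ (measurable_ofReal_norm_toCLM_rpow _ _)]
    _ ≤ ∫⁻ h, (⨆ v, inverseMoment μ ε v) * ENNReal.ofReal (‖toCLM h u‖ ^ (-ε)) ∂ν := by
        gcongr with h
        exact le_iSup _ (h • u)
    _ = (⨆ v, inverseMoment μ ε v) * inverseMoment ν ε u :=
        lintegral_const_mul _ (measurable_ofReal_norm_toCLM_rpow u _)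

lemma exists_le_exp_of_submultiplicative {a : ℕ → ENNReal} (hadd : ∀ m n, a (m + n) ≤ a m * a n)
    (htop : ∀ n, a n ≠ ⊤) {n₀ : ℕ} (hn₀ : 0 < n₀) {δ : ℝ} (hδ : 0 < δ)
    (h : a n₀ ≤ ENNReal.ofReal (Real.exp (-δ))) :
    ∃ C ≠ ⊤, ∃ c > 0, ∀ n : ℕ, a n ≤ C * ENNReal.ofReal (Real.exp (-(c * n))) := by
  have hpow (q r : ℕ) : a (n₀ * q + r) ≤ a n₀ ^ q * a r := by
    induction q with
    | zero => simp
    | succ q ih =>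
      calc a (n₀ * (q + 1) + r) = a (n₀ + (n₀ * q + r)) := by congr 1; ring
        _ ≤ a n₀ * (a n₀ ^ q * a r) := (hadd _ _).trans (by gcongr)
        _ = a n₀ ^ (q + 1) * a r := by ring
  refine ⟨(∑ r ∈ Finset.range n₀, a r) * ENNReal.ofReal (Real.exp δ),
    ENNReal.mul_ne_top (ENNReal.sum_ne_top.2 fun r _ => htop r) ENNReal.ofReal_ne_top, δ / n₀,
    by positivity, fun n => ?_⟩
  have hrem : a (n % n₀) ≤ ∑ r ∈ Finset.range n₀, a r :=
    Finset.single_le_sum_of_canonicallyOrdered (Finset.mem_range.2 (Nat.mod_lt n hn₀))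
  have hfloor : δ / n₀ * n ≤ δ * (n / n₀ : ℕ) + δ := by
    have hlt : (n : ℝ) / n₀ ≤ (n / n₀ : ℕ) + 1 := (Nat.lt_floor_add_one ((n : ℝ) / n₀)).le.trans
      (by rw [Nat.floor_div_eq_div])
    calc δ / n₀ * n = δ * (n / n₀) := by ring
      _ ≤ δ * ((n / n₀ : ℕ) + 1) := by gcongr
      _ = δ * (n / n₀ : ℕ) + δ := by ring
  calc a n = a (n₀ * (n / n₀) + n % n₀) := by rw [Nat.div_add_mod]
    _ ≤ ENNReal.ofReal (Real.exp (-δ)) ^ (n / n₀) * ∑ r ∈ Finset.range n₀, a r :=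
        (hpow _ _).trans (by gcongr)
    _ = (∑ r ∈ Finset.range n₀, a r) * ENNReal.ofReal (Real.exp (-(δ * (n / n₀ : ℕ)))) := by
        rw [← ENNReal.ofReal_pow (Real.exp_pos _).le, ← Real.exp_nat_mul, mul_comm]
        congr 3
        ring
    _ ≤ (∑ r ∈ Finset.range n₀, a r) * ENNReal.ofReal (Real.exp δ * Real.exp (-(δ / n₀ * n))) := by
        rw [← Real.exp_add]
        gcongr
        linarith
    _ = _ := by rw [ENNReal.ofReal_mul (Real.exp_pos _).le, mul_assoc]

lemma exp_le_one_add_add_sq_mul_exp_abs (y : ℝ) :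
    Real.exp y ≤ 1 + y + y ^ 2 * Real.exp |y| := by
  have h := Complex.norm_exp_sub_sum_le_norm_mul_exp (y : ℂ) 2
  simp only [Finset.sum_range_succ, Finset.sum_range_zero, pow_zero, Nat.factorial, pow_one,
    Nat.cast_one, div_one, zero_add, mul_one] at h
  rw [← Complex.ofReal_exp, ← Complex.ofReal_one, ← Complex.ofReal_add, ← Complex.ofReal_sub,
    Complex.norm_real, Complex.norm_real, Real.norm_eq_abs, Real.norm_eq_abs, sq_abs] at h
  linarith [(abs_le.1 h).2]

lemma kappa_sq_le (g : SL2) {ε : ℝ} (hε : 0 < ε) : kappa g ^ 2 ≤ 16 / ε ^ 2 * opNorm g ^ (ε / 2) :=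
  calc kappa g ^ 2 ≤ (opNorm g ^ (ε / 4) / (ε / 4)) ^ 2 :=
        pow_le_pow_left₀ (kappa_nonneg g)
          (Real.log_le_rpow_div (opNorm_nonneg g) (by positivity)) 2
    _ = 16 / ε ^ 2 * (opNorm g ^ (ε / 4)) ^ 2 := by
        field_simp
        ring
    _ = 16 / ε ^ 2 * opNorm g ^ (ε / 2) := by
        rw [← Real.rpow_mul_natCast (opNorm_nonneg g)]
        congr 2
        push_cast
        ring

lemma norm_toCLM_rpow_neg_le_quadratic (g : SL2) (u : UnitVec) {ε ε₁ : ℝ} (hε : 0 < ε)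
    (hle : ε ≤ ε₁ / 2) :
    ‖toCLM g u‖ ^ (-ε) ≤ 1 - ε * logNorm g u + ε ^ 2 * (16 / ε₁ ^ 2 * opNorm g ^ ε₁) := by
  have hκ := kappa_nonneg g
  have hlog := abs_logNorm_le g u
  have hsq : (-ε * logNorm g u) ^ 2 ≤ ε ^ 2 * (16 / ε₁ ^ 2 * opNorm g ^ (ε₁ / 2)) := by
    rw [mul_pow, neg_sq, ← sq_abs (logNorm g u)]
    gcongr
    exact (pow_le_pow_left₀ (abs_nonneg _) hlog 2).trans (kappa_sq_le g (by linarith))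
  have hexp : Real.exp |-ε * logNorm g u| ≤ opNorm g ^ (ε₁ / 2) := by
    rw [← exp_kappa, ← Real.exp_mul, Real.exp_le_exp, abs_mul, abs_neg, abs_of_pos hε, mul_comm]
    gcongr
  calc ‖toCLM g u‖ ^ (-ε) = Real.exp (-ε * logNorm g u) := norm_toCLM_rpow_eq_exp g u _
    _ ≤ 1 + -ε * logNorm g u + (-ε * logNorm g u) ^ 2 * Real.exp |-ε * logNorm g u| :=
        exp_le_one_add_add_sq_mul_exp_abs _
    _ ≤ 1 + -ε * logNorm g u +
          ε ^ 2 * (16 / ε₁ ^ 2 * opNorm g ^ (ε₁ / 2)) * opNorm g ^ (ε₁ / 2) := by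
        gcongr
        exact (sq_nonneg _).trans hsq
    _ = 1 - ε * logNorm g u +
          ε ^ 2 * (16 / ε₁ ^ 2 * (opNorm g ^ (ε₁ / 2) * opNorm g ^ (ε₁ / 2))) := by ring
    _ = _ := by rw [← Real.rpow_add (opNorm_pos g), add_halves]

lemma inverseMoment_le_quadratic {ρ : Measure SL2} [IsProbabilityMeasure ρ] {ε ε₁ : ℝ}
    (hε : 0 < ε) (hle : ε ≤ ε₁ / 2) (hρ : expMoment ρ ε₁ < ⊤) (u : UnitVec) :
    inverseMoment ρ ε u ≤ ENNReal.ofReal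
      (1 - ε * drift logNorm ρ u + ε ^ 2 * (16 / ε₁ ^ 2 * ∫ g, opNorm g ^ ε₁ ∂ρ)) := by
  have hlog : Integrable (fun g => ε * logNorm g u) ρ :=
    (isDominatedCocycle_logNorm.integrable_left (integrable_kappa (by linarith) hρ) u).const_mul ε
  have hlin : Integrable (fun g => 1 - ε * logNorm g u) ρ := (integrable_const 1).sub hlog
  have hquad : Integrable (fun g => ε ^ 2 * (16 / ε₁ ^ 2 * opNorm g ^ ε₁)) ρ :=
    ((integrable_opNorm_rpow hρ).const_mul _).const_mul _
  have hpoint (g : SL2) := norm_toCLM_rpow_neg_le_quadratic g u hε hle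
  calc inverseMoment ρ ε u
      ≤ ∫⁻ g, ENNReal.ofReal
          (1 - ε * logNorm g u + ε ^ 2 * (16 / ε₁ ^ 2 * opNorm g ^ ε₁)) ∂ρ :=
        lintegral_mono fun g => ENNReal.ofReal_le_ofReal (hpoint g)
    _ = ENNReal.ofReal
          (∫ g, (1 - ε * logNorm g u + ε ^ 2 * (16 / ε₁ ^ 2 * opNorm g ^ ε₁)) ∂ρ) :=
        (ofReal_integral_eq_lintegral_ofReal (hlin.add hquad) (ae_of_all _ fun g =>
          (Real.rpow_nonneg (norm_nonneg _) _).trans (hpoint g))).symm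
    _ = _ := by
        rw [integral_add hlin hquad, integral_sub (integrable_const _) hlog, integral_const_mul,
          integral_const_mul, integral_const_mul, integral_const, probReal_univ, one_smul, drift]

lemma exists_forall_inverseMoment_le_exp {ρ : Measure SL2} [IsProbabilityMeasure ρ] {ε₁ l : ℝ}
    (hε₁ : 0 < ε₁) (hρ : expMoment ρ ε₁ < ⊤) (hl : 0 < l)
    (hdrift : ∀ u, l ≤ drift logNorm ρ u) :
    ∃ ε₀ > 0, ε₀ ≤ ε₁ ∧ ∀ ε, 0 < ε → ε ≤ ε₀ → ∀ u,
      inverseMoment ρ ε u ≤ ENNReal.ofReal (Real.exp (-(ε * l / 2))) := by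
  set K : ℝ := 16 / ε₁ ^ 2 * ∫ g, opNorm g ^ ε₁ ∂ρ
  have hK0 : 0 ≤ K := mul_nonneg (by positivity)
    (integral_nonneg fun g => Real.rpow_nonneg (opNorm_nonneg g) _)
  refine ⟨min (ε₁ / 2) (l / (2 * (K + 1))), by positivity,
    (min_le_left _ _).trans (half_le_self hε₁.le), fun ε hε hle u => ?_⟩
  refine (inverseMoment_le_quadratic hε (hle.trans (min_le_left _ _)) hρ u).trans
    (ENNReal.ofReal_le_ofReal ?_)
  have hεK : ε * K ≤ l / 2 := by
    have hle' := hle.trans (min_le_right _ _)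
    rw [le_div_iff₀ (by positivity)] at hle'
    linarith
  calc 1 - ε * drift logNorm ρ u + ε ^ 2 * K = 1 + ε * (ε * K - drift logNorm ρ u) := by ring
    _ ≤ 1 + ε * (l / 2 - l) := by gcongr; exact hdrift u
    _ = -(ε * l / 2) + 1 := by ring
    _ ≤ Real.exp (-(ε * l / 2)) := Real.add_one_le_exp _

theorem exists_iSup_inverseMoment_le_exp {μ : Measure SL2} [IsProbabilityMeasure μ]
    (hzd : ZariskiDense μ) {ε₁ : ℝ} (hε₁ : 0 < ε₁) (hμ : expMoment μ ε₁ < ⊤) :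
    ∃ ε₀ > 0, ε₀ ≤ ε₁ ∧ ∀ ε, 0 < ε → ε ≤ ε₀ → ∃ C ≠ ⊤, ∃ c > 0, ∀ n : ℕ,
      ⨆ u, inverseMoment (convPow μ n) ε u ≤ C * ENNReal.ofReal (Real.exp (-(c * n))) := by
  have hmoment (n : ℕ) : expMoment (convPow μ n) ε₁ < ⊤ :=
    (expMoment_convPow_le μ hε₁.le n).trans_lt (ENNReal.pow_lt_top hμ)
  obtain ⟨n₀, l, hl, hdrift⟩ := exists_pos_forall_le_drift_logNorm hzd fun n =>
    integrable_kappa hε₁ (hmoment n)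
  have hn₀ : 0 < n₀ := by
    rw [Nat.pos_iff_ne_zero]
    rintro rfl
    obtain ⟨v, hv⟩ := NormedSpace.sphere_nonempty (x := (0 : Plane)).2 zero_le_one
    refine hl.not_ge ((hdrift ⟨v, hv⟩).trans_eq ?_)
    exact isDominatedCocycle_logNorm.drift_dirac_one _
  obtain ⟨ε₀, hε₀, hle₀, hone⟩ := exists_forall_inverseMoment_le_exp hε₁ (hmoment n₀) hl hdrift
  refine ⟨ε₀, hε₀, hle₀, fun ε hε hle => ?_⟩
  refine exists_le_exp_of_submultiplicative (fun m n => iSup_le fun u => ?_) (fun n => ?_) hn₀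
    (by positivity : 0 < ε * l / 2) (iSup_le (hone ε hε hle))
  · rw [convPow_add]
    exact (inverseMoment_mconv_le _ _ _ _).trans (by gcongr; exact le_iSup _ u)
  · refine ((iSup_le fun u => inverseMoment_le_expMoment _ hε.le u).trans_lt ?_).ne
    exact (expMoment_mono _ (hle.trans hle₀)).trans_lt (hmoment n)

/-! ### Hölder regularity -/

-- Apply `opNorm_mul_abs_area_le` to `u` and `w = b⁻¹ (rot (b u))`, for which `area u w = ‖b u‖²`.
lemma opNorm_mul_mul_norm_toCLM_le (h b : SL2) (u : UnitVec) :
    opNorm (h * b) * ‖toCLM b u‖ ≤ opNorm b * ‖toCLM (h * b) u‖ + opNorm h := by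
  set m := toCLM b u
  have hm : 0 < ‖m‖ := u.norm_toCLM_pos b
  set w := toCLM b⁻¹ (rot m) with hw
  have harea : area (u : Plane) w = ‖m‖ ^ 2 := by rw [hw, ← area_toCLM_left, area_rot_self]
  have hnorm : ‖w‖ ≤ opNorm b * ‖m‖ := by
    simpa only [opNorm_inv, norm_rot] using norm_toCLM_le b⁻¹ (rot m)
  have himage : ‖toCLM (h * b) w‖ ≤ opNorm h * ‖m‖ := by
    simpa only [hw, toCLM_mul_apply, toCLM_apply_inv_self, norm_rot] using norm_toCLM_le h (rot m)
  have hbound := opNorm_mul_abs_area_le (h * b) u w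
  rw [harea, abs_of_nonneg (by positivity), norm_eq_of_mem_sphere u, one_mul] at hbound
  refine le_of_mul_le_mul_right ?_ hm
  calc opNorm (h * b) * ‖m‖ * ‖m‖ = opNorm (h * b) * ‖m‖ ^ 2 := by ring
    _ ≤ opNorm b * ‖m‖ * ‖toCLM (h * b) u‖ + opNorm h * ‖m‖ := hbound.trans (by gcongr)
    _ = (opNorm b * ‖toCLM (h * b) u‖ + opNorm h) * ‖m‖ := by ring

lemma opNorm_mul_div_norm_toCLM_le (h b : SL2) (u : UnitVec) :
    opNorm (h * b) / ‖toCLM (h * b) u‖ ≤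
      opNorm b / ‖toCLM b u‖ + opNorm h ^ 2 * (‖toCLM b u‖ ^ 2)⁻¹ := by
  have hb := u.norm_toCLM_pos b
  have hhb := u.norm_toCLM_pos (h * b)
  have hh := opNorm_nonneg h
  have hle : ‖toCLM b u‖ ≤ opNorm h * ‖toCLM (h * b) u‖ := by
    rw [toCLM_mul_apply]
    exact norm_le_opNorm_mul_norm_toCLM h _
  calc opNorm (h * b) / ‖toCLM (h * b) u‖
      = opNorm (h * b) * ‖toCLM b u‖ / (‖toCLM b u‖ * ‖toCLM (h * b) u‖) := by field_simp
    _ ≤ (opNorm b * ‖toCLM (h * b) u‖ + opNorm h) / (‖toCLM b u‖ * ‖toCLM (h * b) u‖) := by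
        gcongr
        exact opNorm_mul_mul_norm_toCLM_le h b u
    _ = opNorm b / ‖toCLM b u‖ +
          opNorm h * ‖toCLM b u‖ / (‖toCLM b u‖ ^ 2 * ‖toCLM (h * b) u‖) := by field_simp
    _ ≤ opNorm b / ‖toCLM b u‖ + opNorm h * (opNorm h * ‖toCLM (h * b) u‖) /
          (‖toCLM b u‖ ^ 2 * ‖toCLM (h * b) u‖) := by gcongr
    _ = opNorm b / ‖toCLM b u‖ + opNorm h ^ 2 * (‖toCLM b u‖ ^ 2)⁻¹ := by field_simp

/-- The mean of `(‖g‖ / ‖gu‖) ^ ε` over `g` of law `ρ`; a uniform bound says that the direction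
most contracted by `g` is rarely close to `u`. -/
def distortionMoment (ρ : Measure SL2) (ε : ℝ) (u : UnitVec) : ENNReal :=
  ∫⁻ g, ENNReal.ofReal ((opNorm g / ‖toCLM g u‖) ^ ε) ∂ρ

lemma measurable_ofReal_distortion (ε : ℝ) (u : UnitVec) :
    Measurable fun g => ENNReal.ofReal ((opNorm g / ‖toCLM g u‖) ^ ε) := by
  have hnorm : Measurable fun g : SL2 => ‖toCLM g u‖ := Continuous.measurable (by fun_prop)
  exact ((continuous_opNorm.measurable.div hnorm).pow_const ε).ennreal_ofReal

lemma ofReal_distortion_mul_le {ε : ℝ} (hε : 0 ≤ ε) (hε₁ : ε ≤ 1) (h b : SL2) (u : UnitVec) :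
    ENNReal.ofReal ((opNorm (h * b) / ‖toCLM (h * b) u‖) ^ ε) ≤
      ENNReal.ofReal ((opNorm b / ‖toCLM b u‖) ^ ε) +
        ENNReal.ofReal (opNorm h ^ (2 * ε)) * ENNReal.ofReal (‖toCLM b u‖ ^ (-(2 * ε))) := by
  have hh := opNorm_nonneg h
  have hb := opNorm_nonneg b
  have hhb := opNorm_nonneg (h * b)
  rw [← ENNReal.ofReal_mul (by positivity), ← ENNReal.ofReal_add (by positivity) (by positivity)]
  apply ENNReal.ofReal_le_ofReal
  calc (opNorm (h * b) / ‖toCLM (h * b) u‖) ^ ε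
      ≤ (opNorm b / ‖toCLM b u‖ + opNorm h ^ 2 * (‖toCLM b u‖ ^ 2)⁻¹) ^ ε :=
        Real.rpow_le_rpow (by positivity) (opNorm_mul_div_norm_toCLM_le h b u) hε
    _ ≤ (opNorm b / ‖toCLM b u‖) ^ ε + (opNorm h ^ 2 * (‖toCLM b u‖ ^ 2)⁻¹) ^ ε :=
        Real.rpow_add_le_add_rpow (by positivity) (by positivity) hε hε₁
    _ = (opNorm b / ‖toCLM b u‖) ^ ε + opNorm h ^ (2 * ε) * ‖toCLM b u‖ ^ (-(2 * ε)) := by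
        rw [Real.mul_rpow (by positivity) (by positivity), Real.inv_rpow (by positivity),
          ← Real.rpow_natCast_mul hh, ← Real.rpow_natCast_mul (norm_nonneg _),
          Real.rpow_neg (norm_nonneg _), Nat.cast_two]

lemma distortionMoment_mconv_le (μ ν : Measure SL2) [IsProbabilityMeasure μ] [SFinite ν] {ε : ℝ}
    (hε : 0 ≤ ε) (hε₁ : ε ≤ 1) (u : UnitVec) :
    distortionMoment (μ ∗ₘ ν) ε u ≤
      distortionMoment ν ε u + expMoment μ (2 * ε) * inverseMoment ν (2 * ε) u := by
  calc distortionMoment (μ ∗ₘ ν) ε u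
      = ∫⁻ h, ∫⁻ b, ENNReal.ofReal ((opNorm (h * b) / ‖toCLM (h * b) u‖) ^ ε) ∂ν ∂μ :=
        Measure.lintegral_mconv (measurable_ofReal_distortion ε u)
    _ ≤ ∫⁻ h, distortionMoment ν ε u +
          ENNReal.ofReal (opNorm h ^ (2 * ε)) * inverseMoment ν (2 * ε) u ∂μ := by
        refine lintegral_mono fun h =>
          (lintegral_mono fun b => ofReal_distortion_mul_le hε hε₁ h b u).trans_eq ?_
        rw [lintegral_add_left (measurable_ofReal_distortion ε u),
          lintegral_const_mul _ (measurable_ofReal_norm_toCLM_rpow u _)]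
        rfl
    _ = distortionMoment ν ε u + expMoment μ (2 * ε) * inverseMoment ν (2 * ε) u := by
        rw [lintegral_add_left measurable_const, lintegral_mul_const _ (by fun_prop),
          lintegral_const, measure_univ, mul_one]
        rfl

lemma tsum_ofReal_exp_neg_mul_ne_top {c : ℝ} (hc : 0 < c) :
    ∑' n : ℕ, ENNReal.ofReal (Real.exp (-(c * n))) ≠ ⊤ := by
  have hsum : Summable fun n : ℕ => Real.exp (n * -c) :=
    Real.summable_exp_nat_mul_iff.2 (neg_lt_zero.2 hc)
  simpa only [mul_neg, mul_comm] using hsum.tsum_ofReal_ne_top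

lemma exists_distortionMoment_convPow_le {μ : Measure SL2} [IsProbabilityMeasure μ] {ε : ℝ}
    (hε : 0 ≤ ε) (hε₁ : ε ≤ 1) (hμ : expMoment μ (2 * ε) < ⊤) {C : ENNReal} (hC : C ≠ ⊤) {c : ℝ}
    (hc : 0 < c) (hcontr : ∀ n : ℕ, ⨆ u, inverseMoment (convPow μ n) (2 * ε) u ≤
      C * ENNReal.ofReal (Real.exp (-(c * n)))) :
    ∃ D ≠ ⊤, ∀ (n : ℕ) (u : UnitVec), distortionMoment (convPow μ n) ε u ≤ D := by
  have hsum (n : ℕ) (u : UnitVec) : distortionMoment (convPow μ n) ε u ≤ 1 + expMoment μ (2 * ε) *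
      ∑ j ∈ Finset.range n, C * ENNReal.ofReal (Real.exp (-(c * j))) := by
    induction n with
    | zero =>
      rw [convPow, distortionMoment, lintegral_dirac, map_one, one_apply_eq_self,
        norm_eq_of_mem_sphere, opNorm_one, div_one, Real.one_rpow, ENNReal.ofReal_one]
      exact le_self_add
    | succ n ih =>
      refine (distortionMoment_mconv_le μ _ hε hε₁ u).trans ?_
      rw [Finset.sum_range_succ, mul_add, ← add_assoc]
      gcongr
      exact (le_iSup _ u).trans (hcontr n)
  refine ⟨1 + expMoment μ (2 * ε) * ∑' j : ℕ, C * ENNReal.ofReal (Real.exp (-(c * j))), ?_,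
    fun n u => (hsum n u).trans ?_⟩
  · rw [ENNReal.tsum_mul_left]
    exact ENNReal.add_ne_top.2 ⟨ENNReal.one_ne_top, ENNReal.mul_ne_top hμ.ne
      (ENNReal.mul_ne_top hC (tsum_ofReal_exp_neg_mul_ne_top hc))⟩
  · gcongr
    exact ENNReal.sum_le_tsum _

/-- The elements of `SL₂(ℝ)` moving the line `ℝu` within sine distance `δ` of the line `ℝv`. -/
def hitSet (u v : UnitVec) (δ : ℝ) : Set SL2 := {g | |area (toCLM g u) v| ≤ δ * ‖toCLM g u‖}

@[fun_prop] lemma continuous_area_toCLM (u v : Plane) :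
    Continuous fun g : SL2 => area (toCLM g u) v := by
  unfold area
  fun_prop

lemma measurableSet_hitSet (u v : UnitVec) (δ : ℝ) : MeasurableSet (hitSet u v δ) :=
  (isClosed_le (by fun_prop) (by fun_prop)).measurableSet

lemma area_mul_area_sub_area_mul_area (x y v w : Plane) :
    area x v * area y w - area x w * area y v = area x y * area v w := by
  simp only [area]
  ring

lemma norm_le_abs_area_add_abs_area_rot (v : Plane) {w : Plane} (hw : ‖w‖ = 1) :
    ‖v‖ ≤ |area v w| + |area v (rot w)| := by
  have hsq := area_sq_add_area_rot_sq v w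
  rw [hw, one_pow, mul_one, ← sq_abs (area v w), ← sq_abs (area v (rot w))] at hsq
  refine le_of_sq_le_sq ?_ (by positivity)
  nlinarith [mul_nonneg (abs_nonneg (area v w)) (abs_nonneg (area v (rot w)))]

-- In the bases `(u, rot u)` and `(v, rot v)` the map `b` has entries `p, q, r, s` bounded by `‖b‖`,
-- with `|ps - qr| = 1`, while `‖b u‖ ≤ |p| + |q|` and `‖b⁻¹ v‖ ≤ |p| + |r|`.
lemma norm_toCLM_mul_norm_toCLM_inv_le (b : SL2) {u v : Plane} (hu : ‖u‖ = 1) (hv : ‖v‖ = 1) :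
    ‖toCLM b u‖ * ‖toCLM b⁻¹ v‖ ≤ 4 * |area (toCLM b u) v| * opNorm b + 1 := by
  have hru : ‖rot u‖ = 1 := by rw [norm_rot, hu]
  have hrv : ‖rot v‖ = 1 := by rw [norm_rot, hv]
  have hentry {x y : Plane} (hx : ‖x‖ = 1) (hy : ‖y‖ = 1) : |area (toCLM b x) y| ≤ opNorm b := by
    simpa only [hx, hy, mul_one] using
      (abs_area_le _ y).trans (mul_le_mul_of_nonneg_right (norm_toCLM_le b x) (norm_nonneg y))
  have hflip (x : Plane) : |area (toCLM b⁻¹ v) x| = |area (toCLM b x) v| := by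
    rw [area_toCLM_left, inv_inv, area_swap, abs_neg]
  have hdet := area_mul_area_sub_area_mul_area (toCLM b u) (toCLM b (rot u)) v (rot v)
  rw [area_toCLM, area_rot_self, area_rot_self, hu, hv] at hdet
  have hbu := norm_le_abs_area_add_abs_area_rot (toCLM b u) hv
  have hbv := norm_le_abs_area_add_abs_area_rot (toCLM b⁻¹ v) hu
  rw [hflip, hflip] at hbv
  have hq := hentry hu hrv
  have hr := hentry hru hv
  have hs := hentry hru hrv
  set p := area (toCLM b u) v
  set q := area (toCLM b u) (rot v)
  set r := area (toCLM b (rot u)) v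
  set s := area (toCLM b (rot u)) (rot v)
  have hqr : |q| * |r| ≤ |p| * |s| + 1 := by
    rw [← abs_mul, ← abs_mul, show q * r = p * s - 1 by linarith]
    exact (abs_sub _ _).trans_eq (by rw [abs_one])
  calc ‖toCLM b u‖ * ‖toCLM b⁻¹ v‖ ≤ (|p| + |q|) * (|p| + |r|) := by gcongr
    _ = |p| * |p| + |p| * |r| + |p| * |q| + |q| * |r| := by ring
    _ ≤ |p| * opNorm b + |p| * opNorm b + |p| * opNorm b + (|p| * opNorm b + 1) := by
        have hps : |p| * |s| ≤ |p| * opNorm b := by gcongr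
        gcongr
        · exact hentry hu hv
        · linarith
    _ = 4 * |p| * opNorm b + 1 := by ring

lemma one_le_rpow_mul_rpow_add_rpow {K P Q ε : ℝ} (hK : 0 ≤ K) (hP : 0 ≤ P) (hQ : 0 ≤ Q)
    (hε : 0 ≤ ε) (h : 1 ≤ K * (P * Q)) : 1 ≤ K ^ (ε / 2) * (P ^ ε + Q ^ ε) := by
  have hsq {x : ℝ} (hx : 0 ≤ x) : x ^ ε = (x ^ (ε / 2)) ^ 2 := by
    rw [← Real.rpow_mul_natCast hx]
    congr 1
    push_cast
    ring
  have hamgm : P ^ (ε / 2) * Q ^ (ε / 2) ≤ P ^ ε + Q ^ ε := by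
    rw [hsq hP, hsq hQ]
    nlinarith [two_mul_le_add_sq (P ^ (ε / 2)) (Q ^ (ε / 2)), Real.rpow_nonneg hP (ε / 2),
      Real.rpow_nonneg hQ (ε / 2), sq_nonneg (P ^ (ε / 2)), sq_nonneg (Q ^ (ε / 2))]
  calc 1 ≤ (K * (P * Q)) ^ (ε / 2) := Real.one_le_rpow h (by positivity)
    _ = K ^ (ε / 2) * (P ^ (ε / 2) * Q ^ (ε / 2)) := by
        rw [Real.mul_rpow hK (by positivity), Real.mul_rpow hP hQ]
    _ ≤ K ^ (ε / 2) * (P ^ ε + Q ^ ε) := by gcongr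

lemma one_le_of_mem_hitSet {u v : UnitVec} {δ ε : ℝ} (hδ : 0 < δ) (hε : 0 ≤ ε) {b : SL2}
    (hb : b ∈ hitSet u v δ) :
    1 ≤ (5 * δ) ^ (ε / 2) * ((opNorm b / ‖toCLM b u‖) ^ ε + (opNorm b / ‖toCLM b⁻¹ v‖) ^ ε) +
      δ ^ (-ε) * ‖toCLM b u‖ ^ (-(2 * ε)) := by
  have hu := u.norm_toCLM_pos b
  have hv := v.norm_toCLM_pos b⁻¹
  have hb₀ := opNorm_nonneg b
  have hbu : ‖toCLM b u‖ ≤ opNorm b := by simpa using norm_toCLM_le b u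
  rcases le_total 1 (δ * opNorm b ^ 2) with hlarge | hsmall
  · refine (one_le_rpow_mul_rpow_add_rpow (by positivity) (by positivity) (by positivity) hε
      ?_).trans (le_add_of_nonneg_right (by positivity))
    have hprod : ‖toCLM b u‖ * ‖toCLM b⁻¹ v‖ ≤ 5 * δ * opNorm b ^ 2 :=
      calc ‖toCLM b u‖ * ‖toCLM b⁻¹ v‖
          ≤ 4 * |area (toCLM b u) v| * opNorm b + 1 :=
            norm_toCLM_mul_norm_toCLM_inv_le b (norm_eq_of_mem_sphere u) (norm_eq_of_mem_sphere v)
        _ ≤ 4 * (δ * opNorm b) * opNorm b + δ * opNorm b ^ 2 := by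
            gcongr
            exact hb.trans (by gcongr)
        _ = 5 * δ * opNorm b ^ 2 := by ring
    rwa [div_mul_div_comm, mul_div_assoc', one_le_div (by positivity), ← sq]
  · have hle : δ * ‖toCLM b u‖ ^ 2 ≤ 1 := le_trans (by gcongr) hsmall
    refine le_add_of_nonneg_of_le (by positivity) ?_
    calc 1 ≤ (δ * ‖toCLM b u‖ ^ 2) ^ (-ε) :=
          Real.one_le_rpow_of_pos_of_le_one_of_nonpos (by positivity) hle (neg_nonpos.2 hε)
      _ = δ ^ (-ε) * ‖toCLM b u‖ ^ (-(2 * ε)) := by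
          rw [Real.mul_rpow hδ.le (by positivity), ← Real.rpow_natCast_mul hu.le, Nat.cast_two,
            mul_neg]

lemma measure_hitSet_le (ρ : Measure SL2) (u v : UnitVec) {δ ε : ℝ} (hδ : 0 < δ) (hε : 0 ≤ ε) :
    ρ (hitSet u v δ) ≤ ENNReal.ofReal ((5 * δ) ^ (ε / 2)) *
        (distortionMoment ρ ε u + distortionMoment ρ.inv ε v) +
      ENNReal.ofReal (δ ^ (-ε)) * inverseMoment ρ (2 * ε) u := by
  have hu := measurable_ofReal_distortion ε u
  have hv : Measurable fun b : SL2 => ENNReal.ofReal ((opNorm b / ‖toCLM b⁻¹ v‖) ^ ε) := by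
    simpa only [Function.comp_def, opNorm_inv] using
      (measurable_ofReal_distortion ε v).comp measurable_inv
  have hsum : Measurable fun b : SL2 => ENNReal.ofReal ((opNorm b / ‖toCLM b u‖) ^ ε) +
      ENNReal.ofReal ((opNorm b / ‖toCLM b⁻¹ v‖) ^ ε) := hu.add hv
  have hadd := hsum.const_mul (ENNReal.ofReal ((5 * δ) ^ (ε / 2)))
  have hinv : distortionMoment ρ.inv ε v =
      ∫⁻ b, ENNReal.ofReal ((opNorm b / ‖toCLM b⁻¹ v‖) ^ ε) ∂ρ := by
    simp only [distortionMoment, lintegral_inv _ (measurable_ofReal_distortion ε v), opNorm_inv]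
  have hpow := measurable_ofReal_norm_toCLM_rpow u (-(2 * ε))
  rw [hinv, distortionMoment, inverseMoment, ← lintegral_add_left hu,
    ← lintegral_const_mul _ hsum, ← lintegral_const_mul _ hpow, ← lintegral_add_left hadd]
  refine meas_le_lintegral₀ (hadd.add (hpow.const_mul _)).aemeasurable fun b hb => ?_
  have hb₀ := opNorm_nonneg b
  rw [Pi.add_apply, ← ENNReal.ofReal_add (by positivity) (by positivity),
    ← ENNReal.ofReal_mul (by positivity), ← ENNReal.ofReal_mul (by positivity),
    ← ENNReal.ofReal_add (by positivity) (by positivity), ENNReal.one_le_ofReal]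
  exact one_le_of_mem_hitSet hδ hε hb

lemma measSupp_inv (μ : Measure SL2) : measSupp μ.inv = (measSupp μ)⁻¹ := by
  have hsub (ν : Measure SL2) : measSupp ν.inv ⊆ (measSupp ν)⁻¹ := fun g hg U hU hgU => by
    simpa using hg U⁻¹ hU.inv (Set.inv_mem_inv.1 (by simpa using hgU))
  exact (hsub μ).antisymm (Set.inv_subset.2 (by simpa only [Measure.inv_inv] using hsub μ.inv))

lemma zariskiDense_inv {μ : Measure SL2} (hzd : ZariskiDense μ) : ZariskiDense μ.inv := by
  rwa [ZariskiDense, measSupp_inv, Subgroup.closure_inv]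

lemma exists_distortionMoment_le_and_inverseMoment_le {μ : Measure SL2} [IsProbabilityMeasure μ]
    (hzd : ZariskiDense μ) {ε₁ : ℝ} (hε₁ : 0 < ε₁) (hμ : expMoment μ ε₁ < ⊤) :
    ∃ ε₀ > 0, ∀ ε, 0 < ε → ε ≤ ε₀ → ∃ C ≠ ⊤, ∃ c > 0, ∀ (n : ℕ) (u : UnitVec),
      distortionMoment (convPow μ n) ε u ≤ C ∧
      inverseMoment (convPow μ n) (2 * ε) u ≤ C * ENNReal.ofReal (Real.exp (-(c * n))) := by
  obtain ⟨ε₀, hε₀, hε₀₁, hcontr⟩ := exists_iSup_inverseMoment_le_exp hzd hε₁ hμ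
  refine ⟨min 1 (ε₀ / 2), by positivity, fun ε hε hle => ?_⟩
  obtain ⟨hle₁, hle₂⟩ := le_min_iff.1 hle
  obtain ⟨C, hC, c, hc, hcontr⟩ := hcontr (2 * ε) (by positivity) (by linarith)
  obtain ⟨D, hD, hdist⟩ := exists_distortionMoment_convPow_le hε.le hle₁
    ((expMoment_mono μ (by linarith)).trans_lt hμ) hC hc hcontr
  refine ⟨D + C, ENNReal.add_ne_top.2 ⟨hD, hC⟩, c, hc, fun n u =>
    ⟨(hdist n u).trans le_self_add, ?_⟩⟩
  calc inverseMoment (convPow μ n) (2 * ε) u ≤ C * ENNReal.ofReal (Real.exp (-(c * n))) :=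
        (le_iSup _ u).trans (hcontr n)
    _ ≤ (D + C) * ENNReal.ofReal (Real.exp (-(c * n))) := by
        gcongr
        exact le_add_self

-- The distortion bound is applied to `μ` at `u` and to the law of the inverse at `v`.
theorem exists_convPow_hitSet_le {μ : Measure SL2} [IsProbabilityMeasure μ]
    (hzd : ZariskiDense μ) {ε₁ : ℝ} (hε₁ : 0 < ε₁) (hμ : expMoment μ ε₁ < ⊤) :
    ∃ ε > 0, ∃ C ≠ ⊤, ∃ c > 0, ∀ (s : ℝ) (n : ℕ) (u v : UnitVec),
      convPow μ n (hitSet u v (Real.exp (-s))) ≤ C * (ENNReal.ofReal (Real.exp (-(ε * s))) +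
        ENNReal.ofReal (Real.exp (2 * ε * s - c * n))) := by
  obtain ⟨ε₂, hε₂, hright⟩ := exists_distortionMoment_le_and_inverseMoment_le hzd hε₁ hμ
  obtain ⟨ε₃, hε₃, hleft⟩ := exists_distortionMoment_le_and_inverseMoment_le
    (zariskiDense_inv hzd) hε₁ ((expMoment_inv μ ε₁).trans_lt hμ)
  set ε := min ε₂ ε₃
  have hε : 0 < ε := lt_min hε₂ hε₃
  obtain ⟨C, hC, c, hc, hright⟩ := hright ε hε (min_le_left _ _)
  obtain ⟨C', hC', _, _, hleft⟩ := hleft ε hε (min_le_right _ _)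
  have hK : ENNReal.ofReal ((5 : ℝ) ^ (ε / 2)) * (C + C') + C ≠ ⊤ := ENNReal.add_ne_top.2
    ⟨ENNReal.mul_ne_top ENNReal.ofReal_ne_top (ENNReal.add_ne_top.2 ⟨hC, hC'⟩), hC⟩
  refine ⟨ε / 2, by positivity, _, hK, c, hc, fun s n u v => ?_⟩
  set δ := Real.exp (-s)
  have hscale : ENNReal.ofReal ((5 * δ) ^ (ε / 2)) =
      ENNReal.ofReal ((5 : ℝ) ^ (ε / 2)) * ENNReal.ofReal (Real.exp (-(ε / 2 * s))) := by
    rw [← ENNReal.ofReal_mul (by positivity), Real.mul_rpow (by positivity) (by positivity),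
      ← Real.exp_mul, neg_mul, mul_comm s]
  have hdecay : ENNReal.ofReal (δ ^ (-ε)) * ENNReal.ofReal (Real.exp (-(c * n))) =
      ENNReal.ofReal (Real.exp (2 * (ε / 2) * s - c * n)) := by
    rw [← ENNReal.ofReal_mul (by positivity), ← Real.exp_mul, ← Real.exp_add]
    ring_nf
  calc convPow μ n (hitSet u v δ)
      ≤ ENNReal.ofReal ((5 * δ) ^ (ε / 2)) * (C + C') +
          ENNReal.ofReal (δ ^ (-ε)) * (C * ENNReal.ofReal (Real.exp (-(c * n)))) := by
        refine (measure_hitSet_le _ u v (Real.exp_pos _) hε.le).trans ?_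
        rw [← convPow_inv]
        gcongr
        · exact (hright n u).1
        · exact (hleft n v).1
        · exact (hright n u).2
    _ = ENNReal.ofReal ((5 : ℝ) ^ (ε / 2)) * (C + C') * ENNReal.ofReal (Real.exp (-(ε / 2 * s))) +
          C * ENNReal.ofReal (Real.exp (2 * (ε / 2) * s - c * n)) := by
        rw [hscale, ← hdecay]
        ring
    _ ≤ (ENNReal.ofReal ((5 : ℝ) ^ (ε / 2)) * (C + C') + C) *
          (ENNReal.ofReal (Real.exp (-(ε / 2 * s))) +
            ENNReal.ofReal (Real.exp (2 * (ε / 2) * s - c * n))) := by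
        rw [mul_add (_ + C)]
        gcongr
        · exact le_self_add
        · exact le_add_self

/-! ### The renewal bound -/

section MaximumPrinciple

variable {M : Type*} [MeasurableSpace M] [Monoid M] [MeasurableMul₂ M] (μ : Measure M)
  {s : Set M}

lemma convPow_zero_setOf_mul_mem_eq_zero (hs : MeasurableSet s) {g : M} (hg : g ∉ s) :
    convPow μ 0 {h | h * g ∈ s} = 0 := by
  have hpre : MeasurableSet {h | h * g ∈ s} := measurable_mul_const g hs
  rw [convPow, Measure.dirac_apply' _ hpre, Set.indicator_of_notMem]
  rwa [Set.mem_ofPred_eq, one_mul]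

variable [IsProbabilityMeasure μ]

lemma convPow_succ_setOf_mul_mem (hs : MeasurableSet s) (n : ℕ) (g : M) :
    convPow μ (n + 1) {h | h * g ∈ s} = ∫⁻ h', convPow μ n {h | h * (h' * g) ∈ s} ∂μ := by
  have hpre : MeasurableSet {h | h * g ∈ s} := measurable_mul_const g hs
  rw [convPow_succ_right, mconv_apply hpre]
  simp only [Set.mem_ofPred_eq, mul_assoc]

lemma tsum_convPow_setOf_mul_mem_le (hs : MeasurableSet s) {W : ENNReal}
    (hW : ∀ g ∈ s, ∑' n : ℕ, convPow μ n {h | h * g ∈ s} ≤ W) (g : M) :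
    ∑' n : ℕ, convPow μ n {h | h * g ∈ s} ≤ W := by
  refine ENNReal.tsum_le_of_sum_range_le fun N => ?_
  induction N generalizing g with
  | zero => simp
  | succ N ih =>
    by_cases hg : g ∈ s
    · exact (ENNReal.sum_le_tsum _).trans (hW g hg)
    have hmeas (n : ℕ) : Measurable fun h' => convPow μ n {h | h * (h' * g) ∈ s} :=
      measurable_measure_prodMk_right (s := {p : M × M | p.1 * (p.2 * g) ∈ s})
        ((by fun_prop : Measurable fun p : M × M => p.1 * (p.2 * g)) hs)
    calc ∑ n ∈ Finset.range (N + 1), convPow μ n {h | h * g ∈ s}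
        = ∫⁻ h', ∑ n ∈ Finset.range N, convPow μ n {h | h * (h' * g) ∈ s} ∂μ := by
          rw [Finset.sum_range_succ', convPow_zero_setOf_mul_mem_eq_zero μ hs hg, add_zero,
            lintegral_finsetSum _ fun n _ => hmeas n]
          simp only [convPow_succ_setOf_mul_mem μ hs]
      _ ≤ ∫⁻ _, W ∂μ := lintegral_mono fun h' => ih (h' * g)
      _ = W := by rw [lintegral_const, measure_univ, mul_one]

end MaximumPrinciple

lemma tsum_le_of_le_exp_sub {p : ℕ → ENNReal} {C : ENNReal} {x c : ℝ} (hx : 0 ≤ x) (hc : 0 < c)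
    (hone : ∀ n, p n ≤ 1) (hexp : ∀ n : ℕ, p n ≤ C * ENNReal.ofReal (Real.exp (x - c * n))) :
    ∑' n, p n ≤ ENNReal.ofReal (x / c + 1) +
      C * ∑' n : ℕ, ENNReal.ofReal (Real.exp (-(c * n))) := by
  set N := ⌈x / c⌉₊
  have hN : x ≤ c * N := (div_le_iff₀' hc).1 (Nat.le_ceil _)
  rw [← Summable.sum_add_tsum_nat_add' (k := N) ENNReal.summable, ← ENNReal.tsum_mul_left]
  refine add_le_add ?_ (ENNReal.tsum_le_tsum fun n => (hexp _).trans ?_)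
  · calc ∑ n ∈ Finset.range N, p n ≤ ∑ n ∈ Finset.range N, 1 :=
          Finset.sum_le_sum fun n _ => hone n
      _ = ENNReal.ofReal N := by simp
      _ ≤ ENNReal.ofReal (x / c + 1) :=
          ENNReal.ofReal_le_ofReal (Nat.ceil_lt_add_one (by positivity)).le
  · gcongr
    push_cast
    linarith

lemma measure_setOf_norm_toCLM_le (ρ : Measure SL2) (u : UnitVec) {ε : ℝ} (hε : 0 ≤ ε) (L : ℝ) :
    ρ {h | ‖toCLM h u‖ ≤ Real.exp L} ≤
      ENNReal.ofReal (Real.exp (ε * L)) * inverseMoment ρ ε u := by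
  have hmeas := measurable_ofReal_norm_toCLM_rpow u (-ε)
  rw [inverseMoment, ← lintegral_const_mul _ hmeas]
  refine meas_le_lintegral₀ (hmeas.const_mul _).aemeasurable fun h hh => ?_
  have hpos := u.norm_toCLM_pos h
  rw [← ENNReal.ofReal_mul (by positivity), ENNReal.one_le_ofReal, Real.rpow_neg hpos.le,
    ← div_eq_mul_inv, one_le_div (by positivity), mul_comm, Real.exp_mul]
  exact Real.rpow_le_rpow hpos.le hh hε

/-- The elements of `SL₂(ℝ)` with Cartan projection in `[t, t + a]`. -/
def shell (t a : ℝ) : Set SL2 := {g | kappa g ∈ Set.Icc t (t + a)}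

lemma measurableSet_shell (t a : ℝ) : MeasurableSet (shell t a) :=
  continuous_kappa.measurable measurableSet_Icc

lemma exists_setOf_mul_mem_shell_subset {t a : ℝ} {g : SL2} (hg : g ∈ shell t a) :
    ∃ u : UnitVec, {h | h * g ∈ shell t a} ⊆ {h | ‖toCLM h u‖ ≤ Real.exp a} := by
  obtain ⟨v, hv, hgv⟩ := exists_norm_toCLM_eq_opNorm g
  let w : UnitVec := ⟨v, mem_sphere_zero_iff_norm.2 hv⟩
  refine ⟨g • w, fun h (hh : kappa (h * g) ∈ Set.Icc t (t + a)) => ?_⟩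
  calc ‖toCLM h (g • w : UnitVec)‖ = ‖toCLM (h * g) v‖ / ‖toCLM g v‖ :=
        UnitVec.norm_toCLM_smul h g w
    _ ≤ opNorm (h * g) / opNorm g := by
        rw [hgv]
        gcongr
        · exact opNorm_nonneg g
        · simpa only [hv, mul_one] using norm_toCLM_le (h * g) v
    _ = Real.exp (kappa (h * g) - kappa g) := by rw [Real.exp_sub, exp_kappa, exp_kappa]
    _ ≤ Real.exp a := Real.exp_le_exp.2 (by linarith [hh.2, hg.1])

-- Started at `g` in the shell, the walk is back only while `‖h u‖ ≤ e^a`, where `u` is the image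
-- under `g` of its most dilated direction; this has summable probability.
theorem exists_tsum_convPow_shell_le {μ : Measure SL2} [IsProbabilityMeasure μ]
    (hzd : ZariskiDense μ) {ε₁ : ℝ} (hε₁ : 0 < ε₁) (hμ : expMoment μ ε₁ < ⊤) :
    ∃ C ≠ ⊤, ∀ t a : ℝ, 0 ≤ a →
      ∑' n : ℕ, convPow μ n (shell t a) ≤ C * ENNReal.ofReal (1 + a) := by
  obtain ⟨ε, hε, -, hcontr⟩ := exists_iSup_inverseMoment_le_exp hzd hε₁ hμ
  obtain ⟨C, hC, c, hc, hcontr⟩ := hcontr ε hε le_rfl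
  set S := ∑' n : ℕ, ENNReal.ofReal (Real.exp (-(c * n)))
  have hS : S ≠ ⊤ := tsum_ofReal_exp_neg_mul_ne_top hc
  refine ⟨ENNReal.ofReal (ε / c + 1) + C * S,
    ENNReal.add_ne_top.2 ⟨ENNReal.ofReal_ne_top, ENNReal.mul_ne_top hC hS⟩, fun t a ha => ?_⟩
  have hlow (u : UnitVec) : ∑' n : ℕ, convPow μ n {h | ‖toCLM h u‖ ≤ Real.exp a} ≤
      ENNReal.ofReal (ε * a / c + 1) + C * S := by
    refine tsum_le_of_le_exp_sub (by positivity) hc (fun n => prob_le_one) fun n => ?_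
    calc convPow μ n {h | ‖toCLM h u‖ ≤ Real.exp a}
        ≤ ENNReal.ofReal (Real.exp (ε * a)) * (C * ENNReal.ofReal (Real.exp (-(c * n)))) :=
          (measure_setOf_norm_toCLM_le _ u hε.le a).trans
            (by gcongr; exact (le_iSup _ u).trans (hcontr n))
      _ = C * ENNReal.ofReal (Real.exp (ε * a - c * n)) := by
          rw [mul_left_comm, ← ENNReal.ofReal_mul (Real.exp_pos _).le, ← Real.exp_add,
            sub_eq_add_neg]
  have hvisits := tsum_convPow_setOf_mul_mem_le μ (measurableSet_shell t a) (fun g hg => by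
    obtain ⟨u, hu⟩ := exists_setOf_mul_mem_shell_subset hg
    exact (ENNReal.tsum_le_tsum fun n => measure_mono hu).trans (hlow u)) 1
  simp only [mul_one, Set.ofPred_mem_eq] at hvisits
  refine hvisits.trans ?_
  rw [add_mul, ← ENNReal.ofReal_mul (by positivity)]
  refine add_le_add (ENNReal.ofReal_le_ofReal ?_)
    (le_mul_of_one_le_right' (ENNReal.one_le_ofReal.2 (by linarith)))
  rw [mul_div_right_comm]
  nlinarith [div_pos hε hc]

/-! ### Splitting the word -/

lemma mul_mem_hitSet_iff (b h : SL2) (u v : UnitVec) (δ : ℝ) :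
    b * h ∈ hitSet u v δ ↔ b ∈ hitSet (h • u) v δ := by
  have hpos : 0 < ‖toCLM h u‖⁻¹ := inv_pos.2 (u.norm_toCLM_pos h)
  simp only [hitSet, Set.mem_ofPred_eq, UnitVec.coe_smul, map_smul, ← toCLM_mul_apply,
    area_smul_left, norm_smul, abs_mul, Real.norm_eq_abs, abs_of_pos hpos]
  rw [mul_left_comm, mul_le_mul_iff_right₀ hpos]

lemma hitSet_mono (u v : UnitVec) {δ δ' : ℝ} (h : δ ≤ δ') : hitSet u v δ ⊆ hitSet u v δ' :=
  fun g (hg : |area (toCLM g u) v| ≤ δ * ‖toCLM g u‖) =>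
    hg.trans (mul_le_mul_of_nonneg_right h (norm_nonneg _))

lemma mem_shell_of_mul_mem_shell {b h : SL2} {t a q : ℝ} (hbh : b * h ∈ shell t a)
    (hb : kappa b ≤ q) : h ∈ shell (t - q) (a + 2 * q) :=
  ⟨by linarith [hbh.1, kappa_mul_le b h],
    by linarith [hbh.2, kappa_le_kappa_mul_add_kappa_left b h]⟩

/-- If the right factor `h` has `κ h` within `s` of the target shell, the left factor must send the
direction `h u` close to `v`; otherwise the left factor has `κ > s`. -/
lemma mconv_hitSet_inter_shell_le (ρ ν : Measure SL2) [SFinite ρ] [SFinite ν] (u v : UnitVec)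
    {δ : ℝ} {β : ENNReal} (hβ : ∀ w : UnitVec, ρ (hitSet w v δ) ≤ β) (s t a : ℝ) :
    (ρ ∗ₘ ν) (hitSet u v δ ∩ shell t a) ≤ β * ν (shell (t - s) (a + 2 * s)) +
      ∫⁻ b in {b | s < kappa b}, ν {h | b * h ∈ shell t a} ∂ρ := by
  have hmul : Measurable fun p : SL2 × SL2 => p.1 * p.2 := by fun_prop
  have hlarge : MeasurableSet {b : SL2 | s < kappa b} :=
    continuous_kappa.measurable measurableSet_Ioi
  set F : Set (SL2 × SL2) := {p | p.1 * p.2 ∈ shell t a} ∩ Prod.fst ⁻¹' {b | s < kappa b}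
  set E : Set (SL2 × SL2) :=
    {p | p.1 * p.2 ∈ hitSet u v δ} ∩ Prod.snd ⁻¹' shell (t - s) (a + 2 * s)
  have hF : MeasurableSet F := (hmul (measurableSet_shell t a)).inter (measurable_fst hlarge)
  have hE : MeasurableSet E :=
    (hmul (measurableSet_hitSet u v δ)).inter (measurable_snd (measurableSet_shell _ _))
  have hcover : (fun p : SL2 × SL2 => p.1 * p.2) ⁻¹' (hitSet u v δ ∩ shell t a) ⊆ E ∪ F := by
    rintro ⟨b, h⟩ ⟨hhit, hshell⟩
    rcases le_or_gt (kappa b) s with hb | hb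
    · exact .inl ⟨hhit, mem_shell_of_mul_mem_shell hshell hb⟩
    · exact .inr ⟨hshell, hb⟩
  have hEle : (ρ.prod ν) E ≤ β * ν (shell (t - s) (a + 2 * s)) := by
    rw [Measure.prod_apply_symm hE, ← lintegral_indicator_const (measurableSet_shell _ _)]
    refine lintegral_mono fun h => ?_
    by_cases hh : h ∈ shell (t - s) (a + 2 * s)
    · rw [Set.indicator_of_mem hh]
      exact (measure_mono fun b hb => (mul_mem_hitSet_iff b h u v δ).1 hb.1).trans (hβ (h • u))
    · rw [Set.indicator_of_notMem hh, nonpos_iff_eq_zero]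
      exact measure_mono_null (fun b hb => hh hb.2) measure_empty
  have hFeq : (ρ.prod ν) F = ∫⁻ b in {b | s < kappa b}, ν {h | b * h ∈ shell t a} ∂ρ := by
    rw [Measure.prod_apply hF, ← lintegral_indicator hlarge]
    refine lintegral_congr fun b => ?_
    by_cases hb : s < kappa b <;> simp [F, hb, Set.preimage]
  rw [Measure.mconv, Measure.map_apply hmul
    ((measurableSet_hitSet u v δ).inter (measurableSet_shell t a)), ← hFeq]
  exact (measure_mono hcover).trans ((measure_union_le _ _).trans (by gcongr))

lemma measure_setOf_le_kappa_le (ρ : Measure SL2) {ε : ℝ} (hε : 0 ≤ ε) (t : ℝ) :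
    ρ {g | t ≤ kappa g} ≤ ENNReal.ofReal (Real.exp (-(ε * t))) * expMoment ρ ε := by
  have hmeas := (continuous_opNorm_rpow ε).measurable.ennreal_ofReal
  rw [expMoment, ← lintegral_const_mul _ hmeas]
  refine meas_le_lintegral₀ (hmeas.const_mul _).aemeasurable fun g (hg : t ≤ kappa g) => ?_
  rw [← ENNReal.ofReal_mul (by positivity), ENNReal.one_le_ofReal, ← exp_kappa, ← Real.exp_mul,
    ← Real.exp_add]
  exact Real.one_le_exp (by nlinarith)

lemma one_add_two_mul_le_exp {x ε : ℝ} (hx : 0 ≤ x) (hε : 0 < ε) :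
    1 + 2 * x ≤ (1 + 2 / ε) * Real.exp (ε * x) := by
  calc 1 + 2 * x ≤ (1 + 2 / ε) * (ε * x + 1) := by
        have : (1 + 2 / ε) * (ε * x + 1) = 1 + 2 * x + (ε * x + 2 / ε) := by field_simp; ring
        rw [this]
        linarith [mul_nonneg hε.le hx, div_pos two_pos hε]
    _ ≤ (1 + 2 / ε) * Real.exp (ε * x) := by gcongr; exact Real.add_one_le_exp _

lemma setLIntegral_one_add_two_mul_kappa_le (ρ : Measure SL2) {ε : ℝ} (hε : 0 < ε) (s : ℝ) :
    ∫⁻ b in {b | s < kappa b}, ENNReal.ofReal (1 + 2 * kappa b) ∂ρ ≤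
      ENNReal.ofReal ((1 + 4 / ε) * Real.exp (-(ε / 2 * s))) * expMoment ρ ε := by
  have hlarge : MeasurableSet {b : SL2 | s < kappa b} :=
    continuous_kappa.measurable measurableSet_Ioi
  rw [expMoment, ← lintegral_const_mul _ (continuous_opNorm_rpow _).measurable.ennreal_ofReal]
  refine (setLIntegral_mono' hlarge fun b (hb : s < kappa b) => ?_).trans
    (setLIntegral_le_lintegral _ _)
  rw [← ENNReal.ofReal_mul (by positivity)]
  refine ENNReal.ofReal_le_ofReal ((one_add_two_mul_le_exp (kappa_nonneg b) (half_pos hε)).trans ?_)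
  rw [div_div_eq_mul_div, mul_assoc, ← exp_kappa, ← Real.exp_mul, ← Real.exp_add]
  gcongr
  · norm_num
  · nlinarith

section RenewalBound

variable {μ : Measure SL2} [IsProbabilityMeasure μ] {C : ENNReal}

lemma tsum_setLIntegral_convPow_le
    (hC : ∀ t a : ℝ, 0 ≤ a → ∑' n : ℕ, convPow μ n (shell t a) ≤ C * ENNReal.ofReal (1 + a))
    (ρ : Measure SL2) {ε : ℝ} (hε : 0 < ε) {a : ℝ} (ha : 0 ≤ a) (s t : ℝ) :
    ∑' n : ℕ, ∫⁻ b in {b | s < kappa b}, convPow μ n {h | b * h ∈ shell t a} ∂ρ ≤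
      C * ENNReal.ofReal (1 + a) *
        (ENNReal.ofReal ((1 + 4 / ε) * Real.exp (-(ε / 2 * s))) * expMoment ρ ε) := by
  have hmeas (n : ℕ) : Measurable fun b => convPow μ n {h | b * h ∈ shell t a} :=
    measurable_measure_prodMk_left (s := {p : SL2 × SL2 | p.1 * p.2 ∈ shell t a})
      ((by fun_prop : Measurable fun p : SL2 × SL2 => p.1 * p.2) (measurableSet_shell t a))
  have hvisits (b : SL2) : ∑' n : ℕ, convPow μ n {h | b * h ∈ shell t a} ≤
      C * ENNReal.ofReal (1 + a) * ENNReal.ofReal (1 + 2 * kappa b) := by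
    have hb := kappa_nonneg b
    calc ∑' n : ℕ, convPow μ n {h | b * h ∈ shell t a}
        ≤ ∑' n : ℕ, convPow μ n (shell (t - kappa b) (a + 2 * kappa b)) :=
          ENNReal.tsum_le_tsum fun n =>
            measure_mono fun h hh => mem_shell_of_mul_mem_shell hh le_rfl
      _ ≤ C * ENNReal.ofReal (1 + (a + 2 * kappa b)) := hC _ _ (by positivity)
      _ ≤ C * ENNReal.ofReal (1 + a) * ENNReal.ofReal (1 + 2 * kappa b) := by
          rw [mul_assoc, ← ENNReal.ofReal_mul (by positivity)]
          gcongr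
          nlinarith
  rw [← lintegral_tsum fun n => (hmeas n).aemeasurable]
  calc ∫⁻ b in {b | s < kappa b}, ∑' n : ℕ, convPow μ n {h | b * h ∈ shell t a} ∂ρ
      ≤ ∫⁻ b in {b | s < kappa b},
          C * ENNReal.ofReal (1 + a) * ENNReal.ofReal (1 + 2 * kappa b) ∂ρ :=
        lintegral_mono hvisits
    _ = C * ENNReal.ofReal (1 + a) *
          ∫⁻ b in {b | s < kappa b}, ENNReal.ofReal (1 + 2 * kappa b) ∂ρ :=
        lintegral_const_mul _ (by have := continuous_kappa; fun_prop)
    _ ≤ _ := by gcongr; exact setLIntegral_one_add_two_mul_kappa_le ρ hε s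

lemma tsum_mconv_hitSet_inter_shell_le
    (hC : ∀ t a : ℝ, 0 ≤ a → ∑' n : ℕ, convPow μ n (shell t a) ≤ C * ENNReal.ofReal (1 + a))
    (ρ : Measure SL2) [SFinite ρ] (u v : UnitVec) {δ : ℝ} {β : ENNReal}
    (hβ : ∀ w : UnitVec, ρ (hitSet w v δ) ≤ β) {ε : ℝ} (hε : 0 < ε) {s a : ℝ} (hs : 0 ≤ s)
    (ha : 0 ≤ a) (t : ℝ) :
    ∑' n : ℕ, (ρ ∗ₘ convPow μ n) (hitSet u v δ ∩ shell t a) ≤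
      C * ENNReal.ofReal (1 + a) * (β * ENNReal.ofReal (1 + 2 * s) +
        ENNReal.ofReal ((1 + 4 / ε) * Real.exp (-(ε / 2 * s))) * expMoment ρ ε) := by
  refine (ENNReal.tsum_le_tsum fun n =>
    mconv_hitSet_inter_shell_le ρ (convPow μ n) u v hβ s t a).trans ?_
  rw [ENNReal.tsum_add, ENNReal.tsum_mul_left, mul_add]
  refine add_le_add ?_ (tsum_setLIntegral_convPow_le hC ρ hε ha s t)
  calc β * ∑' n : ℕ, convPow μ n (shell (t - s) (a + 2 * s))
      ≤ β * (C * ENNReal.ofReal (1 + (a + 2 * s))) := by gcongr; exact hC _ _ (by positivity)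
    _ ≤ β * (C * (ENNReal.ofReal (1 + a) * ENNReal.ofReal (1 + 2 * s))) := by
        rw [← ENNReal.ofReal_mul (by positivity)]
        gcongr
        nlinarith
    _ = _ := by ring

end RenewalBound

/-! ### Joint behaviour of direction and norm -/

lemma exists_expMoment_convPow_le_exp (μ : Measure SL2) [IsProbabilityMeasure μ] {ε : ℝ}
    (hε : 0 ≤ ε) (hμ : expMoment μ ε < ⊤) :
    ∃ l : ℝ, 1 ≤ l ∧ ∀ n : ℕ, expMoment (convPow μ n) ε ≤ ENNReal.ofReal (Real.exp (l * n)) := by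
  have hexp : expMoment μ ε ≤ ENNReal.ofReal (Real.exp (max 1 (expMoment μ ε).toReal)) := by
    rw [ENNReal.le_ofReal_iff_toReal_le hμ.ne (Real.exp_pos _).le]
    have hle := le_max_right 1 (expMoment μ ε).toReal
    linarith [Real.add_one_le_exp (max 1 (expMoment μ ε).toReal)]
  refine ⟨_, le_max_left 1 (expMoment μ ε).toReal, fun n => ?_⟩
  calc expMoment (convPow μ n) ε ≤ expMoment μ ε ^ n := expMoment_convPow_le μ hε n
    _ ≤ _ := pow_le_pow_left' hexp n
    _ = _ := by rw [← ENNReal.ofReal_pow (Real.exp_pos _).le, ← Real.exp_nat_mul, mul_comm]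

lemma sum_range_convPow_shell_le {μ : Measure SL2} {ε l : ℝ} (hε : 0 ≤ ε) (hl : 1 ≤ l)
    (hgrowth : ∀ n : ℕ, expMoment (convPow μ n) ε ≤ ENNReal.ofReal (Real.exp (l * n)))
    (k : ℕ) (t a : ℝ) :
    ∑ n ∈ Finset.range k, convPow μ n (shell t a) ≤
      ENNReal.ofReal (Real.exp (2 * (l * k) - ε * t)) := by
  have hterm (n : ℕ) (hn : n ∈ Finset.range k) : convPow μ n (shell t a) ≤
      ENNReal.ofReal (Real.exp (l * k - ε * t)) := by
    have hnk : (n : ℝ) ≤ k := by exact_mod_cast (Finset.mem_range.1 hn).le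
    calc convPow μ n (shell t a) ≤ convPow μ n {g | t ≤ kappa g} := measure_mono fun g hg => hg.1
      _ ≤ ENNReal.ofReal (Real.exp (-(ε * t))) * ENNReal.ofReal (Real.exp (l * n)) :=
          (measure_setOf_le_kappa_le _ hε t).trans (by gcongr; exact hgrowth n)
      _ ≤ ENNReal.ofReal (Real.exp (l * k - ε * t)) := by
          rw [← ENNReal.ofReal_mul (Real.exp_pos _).le, ← Real.exp_add, neg_add_eq_sub]
          gcongr
  have hk : (k : ℝ) ≤ Real.exp (l * k) :=
    calc (k : ℝ) ≤ l * k + 1 := by nlinarith [k.cast_nonneg (α := ℝ)]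
      _ ≤ Real.exp (l * k) := Real.add_one_le_exp _
  refine (Finset.sum_le_card_nsmul _ _ _ hterm).trans ?_
  rw [Finset.card_range, nsmul_eq_mul, ← ENNReal.ofReal_natCast,
    ← ENNReal.ofReal_mul k.cast_nonneg]
  refine ENNReal.ofReal_le_ofReal ?_
  calc (k : ℝ) * Real.exp (l * k - ε * t)
      ≤ Real.exp (l * k) * Real.exp (l * k - ε * t) := by gcongr
    _ = Real.exp (2 * (l * k) - ε * t) := by rw [← Real.exp_add]; ring_nf

lemma mul_ceil_mul_le {l α s : ℝ} (hl : 0 ≤ l) (hαs : 0 ≤ α * s) :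
    l * ⌈α * s⌉₊ ≤ l + l * α * s :=
  calc l * ⌈α * s⌉₊ ≤ l * (α * s + 1) := by gcongr; exact (Nat.ceil_lt_add_one hαs).le
    _ = l + l * α * s := by ring

lemma exp_neg_mul_one_add_two_mul_le {s θ : ℝ} (hs : 0 ≤ s) (hθ : 0 < θ) :
    Real.exp (-(θ * s)) * (1 + 2 * s) ≤ (1 + 4 / θ) * Real.exp (-(θ / 2 * s)) :=
  calc Real.exp (-(θ * s)) * (1 + 2 * s)
      ≤ Real.exp (-(θ * s)) * ((1 + 2 / (θ / 2)) * Real.exp (θ / 2 * s)) := by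
        gcongr
        exact one_add_two_mul_le_exp hs (half_pos hθ)
    _ = (1 + 4 / θ) * Real.exp (-(θ / 2 * s)) := by
        rw [mul_left_comm, ← Real.exp_add]
        ring_nf

section JointLaw

variable {μ : Measure SL2} [IsProbabilityMeasure μ] {ε₁ : ℝ}

lemma exists_convPow_hitSet_le_exp_of_mul_le (hzd : ZariskiDense μ) (hε₁ : 0 < ε₁)
    (hμ : expMoment μ ε₁ < ⊤) {α : ℝ} (hα : 0 < α) :
    ∃ θ > 0, ∃ C ≠ ⊤, ∀ (s : ℝ) (n : ℕ), 0 ≤ s → α * s ≤ n → ∀ u v : UnitVec,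
      convPow μ n (hitSet u v (Real.exp (-s))) ≤ C * ENNReal.ofReal (Real.exp (-(θ * s))) := by
  obtain ⟨ε, hε, C, hC, c, hc, hreg⟩ := exists_convPow_hitSet_le hzd hε₁ hμ
  set η := min 1 (c * α / (3 * ε))
  have hη₁ : η ≤ 1 := min_le_left _ _
  have hη₂ : η * (3 * ε) ≤ c * α := (le_div_iff₀ (by positivity)).1 (min_le_right _ _)
  refine ⟨ε * η, by positivity, C * 2, ENNReal.mul_ne_top hC ENNReal.ofNat_ne_top,
    fun s n hs hn u v => ?_⟩
  have hscale : Real.exp (-s) ≤ Real.exp (-(η * s)) := by gcongr; nlinarith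
  have htime : 2 * ε * (η * s) - c * n ≤ -(ε * η * s) := by nlinarith
  calc convPow μ n (hitSet u v (Real.exp (-s)))
      ≤ convPow μ n (hitSet u v (Real.exp (-(η * s)))) := measure_mono (hitSet_mono u v hscale)
    _ ≤ C * (ENNReal.ofReal (Real.exp (-(ε * (η * s)))) +
          ENNReal.ofReal (Real.exp (2 * ε * (η * s) - c * n))) := hreg _ _ _ _
    _ ≤ C * (ENNReal.ofReal (Real.exp (-(ε * η * s))) +
          ENNReal.ofReal (Real.exp (-(ε * η * s)))) := by
        rw [← mul_assoc ε]
        gcongr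
    _ = C * 2 * ENNReal.ofReal (Real.exp (-(ε * η * s))) := by ring

lemma exists_tsum_convPow_add_ceil_le (hzd : ZariskiDense μ) (hε₁ : 0 < ε₁)
    (hμ : expMoment μ ε₁ < ⊤) {α l : ℝ} (hα : 0 < α) (hl : 0 < l) (hαl : 4 * (l * α) ≤ ε₁)
    (hgrowth : ∀ n : ℕ, expMoment (convPow μ n) ε₁ ≤ ENNReal.ofReal (Real.exp (l * n))) :
    ∃ C ≠ ⊤, ∃ ε' > 0, ∀ (s a t : ℝ) (u v : UnitVec), 0 ≤ s → 0 ≤ a →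
      ∑' n : ℕ, convPow μ (n + ⌈α * s⌉₊) (hitSet u v (Real.exp (-s)) ∩ shell t a) ≤
        C * ENNReal.ofReal ((1 + a) * Real.exp (-(ε' * s))) := by
  obtain ⟨C₁, hC₁, hrenewal⟩ := exists_tsum_convPow_shell_le hzd hε₁ hμ
  obtain ⟨θ, hθ, C₂, hC₂, hreg⟩ := exists_convPow_hitSet_le_exp_of_mul_le hzd hε₁ hμ hα
  refine ⟨C₁ * (C₂ * ENNReal.ofReal (1 + 4 / θ) +
    ENNReal.ofReal ((1 + 4 / ε₁) * Real.exp l)), by finiteness,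
    min (θ / 2) (l * α), by positivity, fun s a t u v hs ha => ?_⟩
  set k := ⌈α * s⌉₊
  set X := Real.exp (-(min (θ / 2) (l * α) * s))
  have hdirection : Real.exp (-(θ * s)) * (1 + 2 * s) ≤ (1 + 4 / θ) * X := by
    refine (exp_neg_mul_one_add_two_mul_le hs hθ).trans ?_
    gcongr
    exact Real.exp_le_exp.2 (neg_le_neg (by gcongr; exact min_le_left _ _))
  have hnorm : Real.exp (-(ε₁ / 2 * s)) * Real.exp (l * k) ≤ Real.exp l * X := by
    have hk := mul_ceil_mul_le hl.le (by positivity : 0 ≤ α * s)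
    have hX : min (θ / 2) (l * α) * s ≤ l * α * s := by gcongr; exact min_le_right _ _
    rw [← Real.exp_add, ← Real.exp_add, Real.exp_le_exp]
    nlinarith
  calc ∑' n : ℕ, convPow μ (n + k) (hitSet u v (Real.exp (-s)) ∩ shell t a)
      = ∑' n : ℕ, (convPow μ k ∗ₘ convPow μ n) (hitSet u v (Real.exp (-s)) ∩ shell t a) := by
        simp only [add_comm _ k, convPow_add]
    _ ≤ C₁ * ENNReal.ofReal (1 + a) * (C₂ * ENNReal.ofReal (Real.exp (-(θ * s))) *
          ENNReal.ofReal (1 + 2 * s) + ENNReal.ofReal ((1 + 4 / ε₁) *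
          Real.exp (-(ε₁ / 2 * s))) * ENNReal.ofReal (Real.exp (l * k))) := by
        refine (tsum_mconv_hitSet_inter_shell_le hrenewal (convPow μ k) u v
          (fun w => hreg s k hs (Nat.le_ceil _) w v) hε₁ hs ha t).trans ?_
        gcongr
        exact hgrowth k
    _ ≤ C₁ * ENNReal.ofReal (1 + a) * (C₂ * ENNReal.ofReal ((1 + 4 / θ) * X) +
          ENNReal.ofReal ((1 + 4 / ε₁) * (Real.exp l * X))) := by
        rw [mul_assoc C₂, ← ENNReal.ofReal_mul (Real.exp_pos _).le,
          ← ENNReal.ofReal_mul (by positivity), mul_assoc (1 + 4 / ε₁)]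
        gcongr
    _ = _ := by
        rw [← mul_assoc (1 + 4 / ε₁), ENNReal.ofReal_mul (by positivity : 0 ≤ 1 + 4 / θ),
          ENNReal.ofReal_mul (by positivity : 0 ≤ (1 + 4 / ε₁) * Real.exp l),
          ENNReal.ofReal_mul (by positivity : 0 ≤ 1 + a)]
        ring

/-- The first `k ≈ α s` letters decide whether the direction is `exp (-s)`-close to `v`, and for
small `α` they are too short to reach norm `exp (δ s)`. -/
theorem exists_tsum_convPow_hitSet_inter_shell_le (hzd : ZariskiDense μ) (hε₁ : 0 < ε₁)
    (hμ : expMoment μ ε₁ < ⊤) {δ : ℝ} (hδ : 0 < δ) :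
    ∃ C ≠ ⊤, ∃ ε' > 0, ∀ (s a t : ℝ) (u v : UnitVec), 0 ≤ s → 0 ≤ a → δ * s ≤ t →
      ∑' n : ℕ, convPow μ n (hitSet u v (Real.exp (-s)) ∩ shell t a) ≤
        C * ENNReal.ofReal ((1 + a) * Real.exp (-(ε' * s))) := by
  obtain ⟨l, hl, hgrowth⟩ := exists_expMoment_convPow_le_exp μ hε₁.le hμ
  have hl₀ : 0 < l := by linarith
  set α := ε₁ * min 1 δ / (4 * l)
  have hα : 0 < α := by positivity
  have hαl : 4 * (l * α) = ε₁ * min 1 δ := by simp only [α]; field_simp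
  have hα₁ : 4 * (l * α) ≤ ε₁ := hαl.trans_le (mul_le_of_le_one_right hε₁.le (min_le_left _ _))
  have hαδ : 4 * (l * α) ≤ ε₁ * δ := hαl.trans_le (by gcongr; exact min_le_right _ _)
  obtain ⟨C, hC, ε', hε', hlate⟩ :=
    exists_tsum_convPow_add_ceil_le hzd hε₁ hμ hα hl₀ hα₁ hgrowth
  refine ⟨ENNReal.ofReal (Real.exp (2 * l)) + C, by finiteness, min (l * α) ε', by positivity,
    fun s a t u v hs ha ht => ?_⟩
  set k := ⌈α * s⌉₊
  have hk := mul_ceil_mul_le hl₀.le (by positivity : 0 ≤ α * s)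
  rw [← Summable.sum_add_tsum_nat_add' (k := k) ENNReal.summable, add_mul]
  refine add_le_add ?_ ((hlate s a t u v hs ha).trans (by gcongr; exact min_le_right _ _))
  calc ∑ n ∈ Finset.range k, convPow μ n (hitSet u v (Real.exp (-s)) ∩ shell t a)
      ≤ ∑ n ∈ Finset.range k, convPow μ n (shell t a) :=
        Finset.sum_le_sum fun n _ => measure_mono Set.inter_subset_right
    _ ≤ ENNReal.ofReal (Real.exp (2 * (l * k) - ε₁ * t)) :=
        sum_range_convPow_shell_le hε₁.le hl hgrowth k t a
    _ ≤ ENNReal.ofReal (Real.exp (2 * l) * Real.exp (-(min (l * α) ε' * s))) := by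
        have hmin : min (l * α) ε' * s ≤ l * α * s := by gcongr; exact min_le_left _ _
        have hnonneg : 0 ≤ l * α * s := by positivity
        have hαs := mul_le_mul_of_nonneg_right hαδ hs
        have hεt := mul_le_mul_of_nonneg_left ht hε₁.le
        rw [← Real.exp_add]
        gcongr
        linarith
    _ ≤ ENNReal.ofReal (Real.exp (2 * l)) *
          ENNReal.ofReal ((1 + a) * Real.exp (-(min (l * α) ε' * s))) := by
        rw [← ENNReal.ofReal_mul (Real.exp_pos _).le]
        gcongr
        exact le_mul_of_one_le_left (Real.exp_pos _).le (by linarith)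

end JointLaw

/-! ### The projective line -/

/-- The chosen representative of a point of `ℙ(ℝ²)`, as a vector of the Euclidean plane. -/
def repVec (x : PX) : Plane := WithLp.toLp 2 x.rep

lemma norm_repVec (x : PX) : ‖repVec x‖ = enorm2 x.rep := by
  rw [EuclideanSpace.norm_eq, enorm2]
  simp [repVec]

lemma norm_repVec_pos (x : PX) : 0 < ‖repVec x‖ :=
  norm_pos_iff.2 fun h => x.rep_nonzero ((WithLp.toLp_eq_zero 2).1 h)

lemma projDist_eq (x y : PX) :
    projDist x y = |area (repVec x) (repVec y)| / (‖repVec x‖ * ‖repVec y‖) := by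
  rw [norm_repVec, norm_repVec]
  rfl

lemma exists_repVec_act_eq_smul (g : SL2) (x : PX) :
    ∃ c : ℝ, c ≠ 0 ∧ repVec (act g x) = c • toCLM g (repVec x) := by
  have hinj : Function.Injective (Matrix.SpecialLinearGroup.toLin' g).toLinearMap :=
    LinearEquiv.injective _
  obtain ⟨c, hc⟩ := Projectivization.exists_smul_eq_mk_rep ℝ
    ((Matrix.SpecialLinearGroup.toLin' g).toLinearMap x.rep)
    (map_zero (Matrix.SpecialLinearGroup.toLin' g) ▸ hinj.ne x.rep_nonzero)
  rw [← Projectivization.map_mk _ hinj x.rep x.rep_nonzero, x.mk_rep] at hc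
  exact ⟨c, c.ne_zero, (congrArg (WithLp.toLp 2) hc).symm⟩

/-- A unit vector spanning the line `x`. -/
def unitRep (x : PX) : UnitVec :=
  ⟨‖repVec x‖⁻¹ • repVec x, by
    rw [mem_sphere_zero_iff_norm, norm_smul, norm_inv, norm_norm,
      inv_mul_cancel₀ (norm_repVec_pos x).ne']⟩

lemma repVec_eq_smul_unitRep (x : PX) : repVec x = ‖repVec x‖ • (unitRep x : Plane) :=
  (smul_inv_smul₀ (norm_repVec_pos x).ne' _).symm

lemma projDist_act_eq (g : SL2) (x y : PX) :
    projDist (act g x) y = |area (toCLM g (unitRep x)) (unitRep y)| / ‖toCLM g (unitRep x)‖ := by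
  obtain ⟨c, hc, hact⟩ := exists_repVec_act_eq_smul g x
  have hx := norm_repVec_pos x
  have hy := norm_repVec_pos y
  have hgx := (unitRep x).norm_toCLM_pos g
  rw [repVec_eq_smul_unitRep x, map_smul, smul_smul] at hact
  rw [projDist_eq, hact, norm_smul, area_smul_left]
  nth_rewrite 1 [repVec_eq_smul_unitRep y]
  rw [area_smul_right, abs_mul (c * _), abs_mul ‖repVec y‖, abs_of_pos hy, Real.norm_eq_abs]
  have : |c * ‖repVec x‖| ≠ 0 := abs_ne_zero.2 (by positivity)
  field_simp

lemma projDist_act_le_and_kappa_sub_mem_iff (g : SL2) (x y : PX) (δ t a : ℝ) :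
    projDist (act g x) y ≤ δ ∧ kappa g - t ∈ Set.Icc 0 a ↔
      g ∈ hitSet (unitRep x) (unitRep y) δ ∩ shell t a := by
  rw [projDist_act_eq, div_le_iff₀ ((unitRep x).norm_toCLM_pos g), Set.sub_mem_Icc_iff_left,
    zero_add, add_comm a]
  rfl

end CartanRenewal

open CartanRenewal in
theorem renewal_independence_cartan_general (μ : Measure SL2) [IsProbabilityMeasure μ]
    (hmom : HasExpMoment μ) (hzd : ZariskiDense μ) {δ : ℝ} (hδ : 0 < δ) :
    ∃ C > (0 : ℝ), ∃ ε' > (0 : ℝ), ∀ (s a t : ℝ) (x x' : PX),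
      0 ≤ s → 0 ≤ a → δ * s ≤ t →
      (∑' n : ℕ, μpi μ n {g | projDist (act (word g) x) x' ≤ Real.exp (-s) ∧
          kappa (word g) - t ∈ Set.Icc 0 a}) ≤
        ENNReal.ofReal (C * (1 + a) * Real.exp (-(ε' * s))) := by
  obtain ⟨ε₁, hε₁, hμ⟩ := hmom
  obtain ⟨C, hC, ε', hε', hsum⟩ :=
    exists_tsum_convPow_hitSet_inter_shell_le hzd hε₁ hμ hδ
  refine ⟨C.toReal + 1, by positivity, ε', hε', fun s a t x x' hs ha ht => ?_⟩
  simp only [projDist_act_le_and_kappa_sub_mem_iff]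
  simp only [μpi_setOf_word_mem μ _ ((measurableSet_hitSet (unitRep x) (unitRep x') _).inter
    (measurableSet_shell t a))]
  refine (hsum s a t _ _ hs ha ht).trans ?_
  rw [mul_assoc, ENNReal.ofReal_mul (by positivity : 0 ≤ C.toReal + 1)]
  gcongr
  rw [← ENNReal.toReal_le_toReal hC ENNReal.ofReal_ne_top, ENNReal.toReal_ofReal (by positivity)]
  linarith

theorem renewal_independence_cartan
    (μ : Measure SL2) [IsProbabilityMeasure μ]
    (hmom : HasExpMoment μ) (hzd : ZariskiDense μ) :
    ∃ C > (0 : ℝ), ∃ ε' > (0 : ℝ), ∀ (s a t : ℝ) (x x' : PX),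
      0 < s → 0 < a → 10 * s < t →
      (∑' n : ℕ, μpi μ n {g | projDist (act (word g) x) x' ≤ Real.exp (-s) ∧
          kappa (word g) - t ∈ Set.Icc 0 a}) ≤
        ENNReal.ofReal (C * (1 + a) ^ 2 * Real.exp (-(ε' * s))) := by
  obtain ⟨C, hC, ε', hε', hsum⟩ :=
    renewal_independence_cartan_general μ hmom hzd (δ := 10) (by norm_num)
  refine ⟨C, hC, ε', hε', fun s a t x x' hs ha ht => (hsum s a t x x' hs.le ha.le ht.le).trans ?_⟩
  gcongr
  exact le_self_pow₀ (by linarith) two_ne_zero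

end
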